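/- (Theorem B, case ν = 0) Assume the integrality condition on (μ,ν) with ν = 0 (so μ ≥ 0 is even), let j ∈ ℕ, and let u : ℝ_+ → ℝ be a smooth function in L²(ℝ_+, x^{μ+1}dx) satisfying D_{μ,0}u = 4j(j+μ+1)u on ℝ_+. Suppose the limit B := lim_{x→0+} u(x)/log(x/2) exists. Then for all ϑ, φ ∈ [0,π] with cos ϑ + cos φ > 0, ∫₀^∞ u(x) J̃_{μ/2}(ax) J̃_{0}(bx) x^{μ+1} dx = A · ((cos ϑ + cos φ)/2)^{(μ+2)/2} · C̃_j^{(μ+1)/2}(cos ϑ) · C̃_{j+μ/2}^{1/2}(cos φ), where a = sin ϑ/(cos ϑ + cos φ), b = sin φ/(cos ϑ + cos φ), and the constant A equals A = (−1)^{j+1} · (j! 2^{2μ} Γ((μ+2)/2)²)/(π Γ(j+μ+1)) · B. -/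

import Mathlib

open MeasureTheory Real Filter Set Metric

noncomputable section

/-- Normalized Bessel function of the first kind: `J̃_α(x) = (x/2)^{-α} J_α(x)`,
given by its (entire) power series. -/
def besselJt (α x : ℝ) : ℝ :=
  ∑' m : ℕ, (-1) ^ m / (m.factorial * Real.Gamma (m + α + 1)) * (x / 2) ^ (2 * m)

/-- Bessel function of the first kind `J_α`. -/
def besselJ (α x : ℝ) : ℝ :=
  ∑' m : ℕ, (-1) ^ m / (m.factorial * Real.Gamma (m + α + 1)) * (x / 2) ^ (2 * (m : ℝ) + α)

/-- Normalized modified Bessel function `Ĩ_α(x) = (x/2)^{-α} I_α(x)`,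
given by its (entire, even) power series. -/
def besselIt (α x : ℝ) : ℝ :=
  ∑' m : ℕ, (x / 2) ^ (2 * m) / (m.factorial * Real.Gamma (m + α + 1))

/-- Modified Bessel function of the first kind `I_α`. -/
def besselI (α x : ℝ) : ℝ :=
  ∑' m : ℕ, (x / 2) ^ (2 * (m : ℝ) + α) / (m.factorial * Real.Gamma (m + α + 1))

/-- Modified Bessel function of the second kind,
`K_α(x) = lim_{β→α} (π/2)(I_{−β}(x) − I_β(x))/sin(βπ)`. -/
def besselK (α x : ℝ) : ℝ :=
  limUnder (nhdsWithin α {α}ᶜ) fun β =>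
    Real.pi / 2 * (besselI (-β) x - besselI β x) / Real.sin (β * Real.pi)

/-- Normalized K-Bessel function `K̃_α(x) = (x/2)^{-α} K_α(x)`. -/
def besselKt (α x : ℝ) : ℝ := (x / 2) ^ (-α) * besselK α x

/-- Normalized Gegenbauer polynomial `C̃_n^λ = Γ(λ) C_n^λ`, where `C_n^λ` is defined via the
generating function `(1 − 2xt + t²)^{−λ} = Σ_{n≥0} C_n^λ(x) tⁿ`; explicitly,
`C̃_n^λ(x) = Σ_{k=0}^{⌊n/2⌋} (−1)^k Γ(λ+n−k)/(k!(n−2k)!) (2x)^{n−2k}`.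
This expression also gives the limit value `C̃_n^0 = lim_{λ→0+} Γ(λ) C_n^λ` for `n ≥ 1`. -/
def gegenbauerCt (n : ℕ) (l x : ℝ) : ℝ :=
  ∑ k ∈ Finset.range (n / 2 + 1),
    (-1) ^ k * Real.Gamma (l + n - k) / (k.factorial * (n - 2 * k).factorial)
      * (2 * x) ^ (n - 2 * k)

/-- Laguerre polynomial `L_n^μ(x) = Σ_{k=0}^n (−1)^k binom(n+μ, n−k) x^k/k!`
(with nonnegative integer parameter `μ`). -/
def laguerreL (n μ : ℕ) (x : ℝ) : ℝ :=
  ∑ k ∈ Finset.range (n + 1),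
    (-1) ^ k * (Nat.choose (n + μ) (n - k)) * x ^ k / k.factorial

/-- The Euler operator `θ = x d/dx`. -/
def eulerOp (u : ℝ → ℝ) : ℝ → ℝ := fun x => x * deriv u x

/-- `(θ+c)(θ+c+ν)u − x² u`, i.e. the operator `Q_ν(θ+c)` applied to `u`. -/
def besselQ (ν c : ℝ) (u : ℝ → ℝ) : ℝ → ℝ := fun x =>
  eulerOp (fun y => eulerOp u y + (c + ν) * u y) x
    + c * (eulerOp u x + (c + ν) * u x) - x ^ 2 * u x

/-- The fourth order differential operator
`D_{μ,ν} = x^{−2}((θ+μ)(θ+μ+ν) − x²)(θ(θ+ν) − x²)`. -/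
def Dop (μ ν : ℝ) (u : ℝ → ℝ) : ℝ → ℝ := fun x =>
  besselQ ν μ (besselQ ν 0 u) x / x ^ 2

/-- The generating function
`G^{μ,ν}(t,x) = (1−t)^{−(μ+ν+2)/2} Ĩ_{μ/2}(tx/(1−t)) K̃_{ν/2}(x/(1−t))`. -/
def genFun (μ ν t x : ℝ) : ℝ :=
  (1 - t) ^ (-(μ + ν + 2) / 2) * besselIt (μ / 2) (t * x / (1 - t))
    * besselKt (ν / 2) (x / (1 - t))

/-- The eigenfunctions `Λ_j^{μ,ν}`, defined as the Taylor coefficients in `t` at `t = 0` of the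
generating function `G^{μ,ν}(t,x) = Σ_{j≥0} Λ_j^{μ,ν}(x) t^j`. -/
def LambdaF (μ ν : ℝ) (j : ℕ) (x : ℝ) : ℝ :=
  iteratedDeriv j (fun t => genFun μ ν t x) 0 / j.factorial

/-- The integrality condition: `μ ≥ ν ≥ −1` are integers of the same parity,
not both equal to `−1`. -/
def IntCond (μ ν : ℤ) : Prop :=
  -1 ≤ ν ∧ ν ≤ μ ∧ Even (μ - ν) ∧ ¬(μ = -1 ∧ ν = -1)

end

/-!
Write `D_{μ,0} u = lam u` as a first order system for `u`, `w = θ²u - x²u` and their derivatives.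
Square integrability forces exponential decay at infinity, by a cutoff energy estimate, and the
bound `u = O(log x)` at the origin kills the boundary terms there. Integrating `u` by parts against
products `J̃_{n+p}(ax) J̃_q(bx)`, `μ = 2n`, hence turns the eigenvalue equation into a relation
between the integrals `∫ u J̃_{n+p}(ax) J̃_q(bx) x^m`. In the coordinates `ϑ`, `φ` this relation is
a Gegenbauer equation, first in `ϑ` for fixed `φ` and then in `φ` for `ϑ = 0`; a solution which is
regular at `cos = 1` is determined by its value there, so the integral is a product of Gegenbauer
polynomials times its value at `a = b = 0`. That constant is found by letting `a → ∞` along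
`b = 0`: averaging over Gaussian weights isolates the logarithmic singularity `B log x` of `u`.
-/

noncomputable section

open scoped Topology

/-! ### Bessel functions of natural order -/

section BesselClifford

variable (p : ℕ) (z : ℝ)

/-- The Bessel–Clifford function `∑ₘ zᵐ / (m! (m + p)!)`. -/
def besselClifford (p : ℕ) (z : ℝ) : ℝ :=
  ∑' m : ℕ, z ^ m / (m.factorial * (m + p).factorial)

lemma norm_besselClifford_term_le (m : ℕ) :
    ‖z ^ m / ((m.factorial : ℝ) * (m + p).factorial)‖ ≤ |z| ^ m / m.factorial := by
  have h : (1 : ℝ) ≤ (m + p).factorial := by exact_mod_cast Nat.factorial_pos _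
  rw [norm_div, norm_pow, Real.norm_eq_abs,
    Real.norm_of_nonneg (by positivity : (0 : ℝ) ≤ m.factorial * (m + p).factorial)]
  gcongr
  exact le_mul_of_one_le_right (by positivity) h

lemma summable_besselClifford :
    Summable fun m : ℕ => z ^ m / ((m.factorial : ℝ) * (m + p).factorial) :=
  .of_norm_bounded (Real.summable_pow_div_factorial |z|) (norm_besselClifford_term_le p z)

lemma besselClifford_zero : besselClifford p 0 = 1 / p.factorial := by
  rw [besselClifford, tsum_eq_single 0 fun m hm => by simp [hm]]
  simp

lemma besselClifford_term_deriv_succ (m : ℕ) :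
    ((m + 1 : ℕ) : ℝ) * z ^ (m + 1 - 1) / ((m + 1).factorial * (m + 1 + p).factorial)
      = z ^ m / (m.factorial * (m + (p + 1)).factorial) := by
  have : (m : ℝ) + 1 ≠ 0 := by positivity
  rw [Nat.factorial_succ, show m + 1 + p = m + (p + 1) by ring, Nat.add_sub_cancel]
  push_cast
  field_simp

lemma norm_besselClifford_term_deriv_le {R y : ℝ} (hy : |y| ≤ R) (m : ℕ) :
    ‖(m : ℝ) * y ^ (m - 1) / ((m.factorial : ℝ) * (m + p).factorial)‖
      ≤ m * R ^ (m - 1) / m.factorial := by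
  have h : (1 : ℝ) ≤ (m + p).factorial := by exact_mod_cast Nat.factorial_pos _
  have hR : 0 ≤ R := (abs_nonneg y).trans hy
  rw [norm_div, norm_mul, norm_pow, Real.norm_natCast, Real.norm_eq_abs,
    Real.norm_of_nonneg (by positivity : (0 : ℝ) ≤ m.factorial * (m + p).factorial)]
  gcongr
  exact le_mul_of_one_le_right (by positivity) h

lemma hasDerivAt_besselClifford :
    HasDerivAt (besselClifford p) (besselClifford (p + 1) z) z := by
  set R : ℝ := |z| + 1 with hR
  have hz : z ∈ ball (0 : ℝ) R := by simp [hR]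
  have hbound : Summable fun m : ℕ => (m : ℝ) * R ^ (m - 1) / m.factorial := by
    rw [← summable_nat_add_iff 1]
    refine (Real.summable_pow_div_factorial R).congr fun m => ?_
    rw [Nat.factorial_succ, Nat.add_sub_cancel]
    push_cast
    field_simp
  have hderiv : Summable fun m : ℕ =>
      (m : ℝ) * z ^ (m - 1) / ((m.factorial : ℝ) * (m + p).factorial) :=
    .of_norm_bounded hbound (norm_besselClifford_term_deriv_le p (by simp [hR]))
  have hsum := hasDerivAt_tsum_of_isPreconnected (𝕜 := ℝ) (F := ℝ) hbound isOpen_ball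
    (convex_ball (0 : ℝ) R).isPreconnected
    (fun m y _ => (hasDerivAt_pow m y).div_const ((m.factorial : ℝ) * (m + p).factorial))
    (fun m y hy => norm_besselClifford_term_deriv_le p (by simpa using (mem_ball.1 hy).le) m)
    hz (summable_besselClifford p z) hz
  have hshift : ∑' m : ℕ, (m : ℝ) * z ^ (m - 1) / ((m.factorial : ℝ) * (m + p).factorial)
      = besselClifford (p + 1) z := by
    rw [hderiv.tsum_eq_zero_add, Nat.cast_zero, zero_mul, zero_div, zero_add]
    exact tsum_congr (besselClifford_term_deriv_succ p z)
  rwa [hshift] at hsum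

lemma besselClifford_recurrence :
    besselClifford p z - (p + 1) * besselClifford (p + 1) z = z * besselClifford (p + 2) z := by
  have hp := summable_besselClifford p z
  have hp1 := (summable_besselClifford (p + 1) z).mul_left ((p : ℝ) + 1)
  have term_zero : z ^ 0 / (((0 : ℕ).factorial : ℝ) * (0 + p).factorial)
      - (p + 1) * (z ^ 0 / (((0 : ℕ).factorial : ℝ) * (0 + (p + 1)).factorial)) = 0 := by
    rw [show 0 + (p + 1) = p + 1 by ring, Nat.factorial_succ, zero_add]
    push_cast
    field_simp
    simp
  have term_succ (m : ℕ) : z ^ (m + 1) / (((m + 1).factorial : ℝ) * (m + 1 + p).factorial)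
      - (p + 1) * (z ^ (m + 1) / ((m + 1).factorial * (m + 1 + (p + 1)).factorial))
      = z * (z ^ m / (m.factorial * (m + (p + 2)).factorial)) := by
    rw [show m + 1 + (p + 1) = (m + 1 + p) + 1 by ring,
      show m + (p + 2) = (m + 1 + p) + 1 by ring, Nat.factorial_succ (m + 1 + p),
      Nat.factorial_succ m]
    push_cast
    field_simp
    ring
  unfold besselClifford
  rw [← tsum_mul_left, ← tsum_mul_left, ← hp.tsum_sub hp1, (hp.sub hp1).tsum_eq_zero_add,
    term_zero, zero_add]
  exact tsum_congr term_succ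

end BesselClifford

section NormBesselJ

variable (p : ℕ) (x : ℝ)

/-- The normalized Bessel function `J̃_p` of natural order, as a Bessel–Clifford function of
`-x²/4`. -/
def normBesselJ (p : ℕ) (x : ℝ) : ℝ := besselClifford p (-(x ^ 2 / 4))

lemma besselJt_natCast : besselJt p x = normBesselJ p x := by
  refine tsum_congr fun m => ?_
  rw [show (m : ℝ) + p + 1 = ((m + p : ℕ) : ℝ) + 1 by push_cast; ring, Gamma_nat_eq_factorial,
    show -(x ^ 2 / 4) = (-1) * (x / 2) ^ 2 by ring, mul_pow, ← pow_mul]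
  ring

lemma normBesselJ_zero : normBesselJ p 0 = 1 / p.factorial := by
  simp [normBesselJ, besselClifford_zero]

lemma normBesselJ_neg : normBesselJ p (-x) = normBesselJ p x := by
  simp [normBesselJ]

lemma hasDerivAt_normBesselJ :
    HasDerivAt (normBesselJ p) (-(x / 2) * normBesselJ (p + 1) x) x := by
  have hsq : HasDerivAt (fun x : ℝ => -(x ^ 2 / 4)) (-(x / 2)) x := by
    convert! ((hasDerivAt_pow 2 x).div_const 4).neg using 1
    ring
  convert! (hasDerivAt_besselClifford p (-(x ^ 2 / 4))).comp x hsq using 1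
  exact mul_comm _ _

lemma continuous_normBesselJ : Continuous (normBesselJ p) :=
  continuous_iff_continuousAt.2 fun x => (hasDerivAt_normBesselJ p x).continuousAt

lemma normBesselJ_recurrence :
    normBesselJ p x - (p + 1) * normBesselJ (p + 1) x + x ^ 2 / 4 * normBesselJ (p + 2) x = 0 := by
  unfold normBesselJ
  linear_combination besselClifford_recurrence p (-(x ^ 2 / 4))

lemma hasDerivAt_normBesselJ_energy :
    HasDerivAt (fun y => normBesselJ p y ^ 2 + (-(y / 2) * normBesselJ (p + 1) y) ^ 2)
      (-(x * (2 * p + 1) * normBesselJ (p + 1) x ^ 2) / 2) x := by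
  have hlin : HasDerivAt (fun y : ℝ => -(y / 2)) (-(1 / 2)) x :=
    ((hasDerivAt_id x).div_const 2).neg
  convert! ((hasDerivAt_normBesselJ p x).pow 2).add
    ((hlin.mul (hasDerivAt_normBesselJ (p + 1) x)).pow 2) using 1
  simp only [Pi.mul_apply, Nat.add_assoc, Nat.reduceAdd]
  push_cast
  linear_combination (x * normBesselJ (p + 1) x) * normBesselJ_recurrence p x

lemma abs_normBesselJ_le_one : |normBesselJ p x| ≤ 1 := by
  wlog hx : 0 ≤ x generalizing x
  · simpa only [normBesselJ_neg] using this (-x) (by linarith)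
  have hanti : AntitoneOn
      (fun y => normBesselJ p y ^ 2 + (-(y / 2) * normBesselJ (p + 1) y) ^ 2) (Ici 0) := by
    refine antitoneOn_of_hasDerivWithinAt_nonpos (convex_Ici 0)
      (fun y _ => (hasDerivAt_normBesselJ_energy p y).continuousAt.continuousWithinAt)
      (fun y _ => (hasDerivAt_normBesselJ_energy p y).hasDerivWithinAt) fun y hy => ?_
    have hy : 0 < y := by simpa using hy
    have : 0 ≤ y * (2 * p + 1) * normBesselJ (p + 1) y ^ 2 := by positivity
    linarith
  have henergy := hanti self_mem_Ici (mem_Ici.2 hx) hx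
  have hzero : (1 : ℝ) / p.factorial ≤ 1 := by
    rw [div_le_one (by positivity)]
    exact_mod_cast Nat.factorial_pos _
  have hzero_sq : (1 / (p.factorial : ℝ)) ^ 2 ≤ 1 := pow_le_one₀ (by positivity) hzero
  simp only [normBesselJ_zero, zero_div, neg_zero, zero_mul] at henergy
  rw [abs_le_one_iff_mul_self_le_one]
  nlinarith [sq_nonneg (-(x / 2) * normBesselJ (p + 1) x)]

end NormBesselJ

/-! ### Gegenbauer polynomials -/

section Gegenbauer

variable (n : ℕ) (l x : ℝ)

/-- The `k`-th summand of `gegenbauerCt n l x`, extended by zero to all `k : ℕ`. -/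
def gegenbauerTerm (n : ℕ) (l x : ℝ) (k : ℕ) : ℝ :=
  if 2 * k ≤ n then (-1) ^ k * Gamma (l + n - k) / (k.factorial * (n - 2 * k).factorial)
      * (2 * x) ^ (n - 2 * k) else 0

lemma gegenbauerTerm_add (m k : ℕ) :
    gegenbauerTerm (2 * k + m) l x k
      = (-1) ^ k * Gamma (l + k + m) / (k.factorial * m.factorial) * (2 * x) ^ m := by
  rw [gegenbauerTerm, if_pos (by lia), Nat.add_sub_cancel_left,
    show l + (2 * k + m : ℕ) - k = l + k + m by push_cast; ring]

lemma gegenbauerTerm_of_lt {k : ℕ} (h : n < 2 * k) : gegenbauerTerm n l x k = 0 :=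
  if_neg (by lia)

lemma gegenbauerCt_eq_sum {K : ℕ} (hK : n / 2 < K) :
    gegenbauerCt n l x = ∑ k ∈ Finset.range K, gegenbauerTerm n l x k := by
  rw [gegenbauerCt, ← Finset.sum_subset (Finset.range_mono (Nat.succ_le_of_lt hK))]
  · refine Finset.sum_congr rfl fun k hk => ?_
    rw [gegenbauerTerm, if_pos (by have := Finset.mem_range.1 hk; lia)]
  · intro k _ hk
    exact gegenbauerTerm_of_lt n l x (by have := Finset.mem_range.not.1 hk; lia)

lemma gegenbauerCt_zero : gegenbauerCt 0 l x = Gamma l := by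
  simp [gegenbauerCt]

lemma gegenbauerCt_one : gegenbauerCt 1 l x = Gamma (l + 1) * (2 * x) := by
  simp [gegenbauerCt]

lemma hasDerivAt_gegenbauerTerm (k : ℕ) :
    HasDerivAt (fun y => gegenbauerTerm (n + 1) l y k) (2 * gegenbauerTerm n (l + 1) x k) x := by
  rcases lt_or_ge n (2 * k) with h | h
  · have hconst : (fun y => gegenbauerTerm (n + 1) l y k) = fun _ => gegenbauerTerm (n + 1) l 0 k :=
      funext fun y => by simp [gegenbauerTerm, show n + 1 - 2 * k = 0 by lia]
    rw [hconst, gegenbauerTerm_of_lt n (l + 1) x h, mul_zero]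
    exact hasDerivAt_const x _
  · obtain ⟨m, rfl⟩ := Nat.exists_eq_add_of_le h
    have hpow : HasDerivAt (fun y : ℝ => (2 * y) ^ (m + 1)) ((m + 1 : ℕ) * (2 * x) ^ m * 2) x := by
      convert! ((hasDerivAt_id x).const_mul 2).pow (m + 1) using 1
      simp
    simp only [Nat.add_assoc, gegenbauerTerm_add]
    convert! hpow.const_mul _ using 1
    rw [Nat.factorial_succ, show l + 1 + k + m = l + k + (m + 1 : ℕ) by push_cast; ring]
    push_cast
    field_simp

lemma hasDerivAt_gegenbauerCt :
    HasDerivAt (gegenbauerCt (n + 1) l) (2 * gegenbauerCt n (l + 1) x) x := by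
  rw [funext fun y => gegenbauerCt_eq_sum (n + 1) l y (K := n + 2) (by lia),
    gegenbauerCt_eq_sum n (l + 1) x (K := n + 2) (by lia), Finset.mul_sum]
  exact HasDerivAt.fun_sum fun k _ => hasDerivAt_gegenbauerTerm n l x k

lemma two_mul_gegenbauerTerm (k : ℕ) :
    2 * x * gegenbauerTerm n (l + 1) x k
      = (n + 1 - 2 * k) * gegenbauerTerm (n + 1) l x k := by
  rcases lt_or_ge (n + 1) (2 * k) with h | h
  · rw [gegenbauerTerm_of_lt _ _ _ h, gegenbauerTerm_of_lt _ _ _ (by lia)]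
    ring
  · obtain ⟨m, hm⟩ := Nat.exists_eq_add_of_le h
    have hn : (n : ℝ) + 1 = 2 * k + m := by exact_mod_cast hm
    rw [hm, gegenbauerTerm_add, hn]
    rcases m with _ | m
    · rw [gegenbauerTerm_of_lt _ _ _ (by lia)]
      simp
    · obtain rfl : n = 2 * k + m := by lia
      rw [gegenbauerTerm_add, Nat.factorial_succ,
        show l + 1 + k + m = l + k + (m + 1 : ℕ) by push_cast; ring]
      push_cast
      field_simp
      ring

lemma gegenbauerTerm_eq_succ {l : ℝ} (hl : 0 < l) (k : ℕ) :
    gegenbauerTerm n (l + 2) x k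
      = -((k + 1) * (l + n + 1 - k)) * gegenbauerTerm (n + 2) l x (k + 1) := by
  rcases lt_or_ge n (2 * k) with h | h
  · rw [gegenbauerTerm_of_lt _ _ _ h, gegenbauerTerm_of_lt _ _ _ (by lia), mul_zero]
  · obtain ⟨m, rfl⟩ := Nat.exists_eq_add_of_le h
    have hGamma : Gamma (l + 2 + k + m) = (l + (k + 1 : ℕ) + m) * Gamma (l + (k + 1 : ℕ) + m) := by
      rw [← Gamma_add_one (by positivity)]
      push_cast
      ring_nf
    rw [show 2 * k + m + 2 = 2 * (k + 1) + m by ring, gegenbauerTerm_add, gegenbauerTerm_add,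
      hGamma, Nat.factorial_succ]
    push_cast
    field_simp
    ring

lemma gegenbauerCt_recurrence {l : ℝ} (hl : 0 < l) :
    4 * (1 - x ^ 2) * gegenbauerCt n (l + 2) x
      - 2 * (2 * l + 1) * x * gegenbauerCt (n + 1) (l + 1) x
      + (n + 2) * (n + 2 + 2 * l) * gegenbauerCt (n + 2) l x = 0 := by
  set T : ℕ → ℝ := gegenbauerTerm (n + 2) l x
  have h2 : gegenbauerCt n (l + 2) x
      = ∑ k ∈ Finset.range (n + 3), -(k * (l + n + 2 - k)) * T k := by
    rw [Finset.sum_range_succ', gegenbauerCt_eq_sum n (l + 2) x (K := n + 2) (by lia)]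
    simp only [gegenbauerTerm_eq_succ n x hl]
    push_cast
    simp only [zero_mul, neg_zero, add_zero]
    exact Finset.sum_congr rfl fun k _ => by ring
  have h1 : 2 * x * gegenbauerCt (n + 1) (l + 1) x
      = ∑ k ∈ Finset.range (n + 3), (n + 2 - 2 * k : ℝ) * T k := by
    rw [gegenbauerCt_eq_sum _ _ _ (K := n + 3) (by lia), Finset.mul_sum]
    refine Finset.sum_congr rfl fun k _ => ?_
    rw [two_mul_gegenbauerTerm]
    push_cast
    ring
  have h2' : 4 * x ^ 2 * gegenbauerCt n (l + 2) x
      = ∑ k ∈ Finset.range (n + 3), (n + 1 - 2 * k : ℝ) * (n + 2 - 2 * k) * T k := by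
    rw [gegenbauerCt_eq_sum _ _ _ (K := n + 3) (by lia), Finset.mul_sum]
    refine Finset.sum_congr rfl fun k _ => ?_
    have e1 := two_mul_gegenbauerTerm n (l + 1) x k
    have e2 := two_mul_gegenbauerTerm (n + 1) l x k
    rw [show l + 1 + 1 = l + 2 by ring] at e1
    push_cast at e2
    linear_combination 2 * x * e1 + (n + 1 - 2 * k : ℝ) * e2
  have h0 := gegenbauerCt_eq_sum (n + 2) l x (K := n + 3) (by lia)
  change _ = ∑ k ∈ Finset.range (n + 3), T k at h0
  have hsum : ∑ k ∈ Finset.range (n + 3), (4 * (-(k * (l + n + 2 - k)) * T k)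
      - (n + 1 - 2 * k : ℝ) * (n + 2 - 2 * k) * T k - (2 * l + 1) * ((n + 2 - 2 * k : ℝ) * T k)
      + (n + 2) * (n + 2 + 2 * l) * T k) = 0 :=
    Finset.sum_eq_zero fun k _ => by ring
  simp only [Finset.sum_add_distrib, Finset.sum_sub_distrib, ← Finset.mul_sum] at hsum
  linear_combination hsum + 4 * h2 - h2' - (2 * l + 1) * h1
    + (n + 2) * (n + 2 + 2 * l) * h0

lemma contDiff_gegenbauerCt : ContDiff ℝ 2 (gegenbauerCt n l) := by
  unfold gegenbauerCt
  fun_prop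

lemma hasDerivAt_deriv_gegenbauerCt :
    HasDerivAt (gegenbauerCt n l) (deriv (gegenbauerCt n l) x) x :=
  ((contDiff_gegenbauerCt n l).differentiable (by norm_num) x).hasDerivAt

lemma hasDerivAt_deriv_deriv_gegenbauerCt :
    HasDerivAt (deriv (gegenbauerCt n l)) (deriv (deriv (gegenbauerCt n l)) x) x :=
  (((contDiff_gegenbauerCt n l).deriv' (n := 1)).differentiable (by norm_num) x).hasDerivAt

theorem gegenbauerCt_ode {l : ℝ} (hl : 0 < l) :
    (1 - x ^ 2) * deriv (deriv (gegenbauerCt n l)) x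
      - (2 * l + 1) * x * deriv (gegenbauerCt n l) x
      + n * (n + 2 * l) * gegenbauerCt n l x = 0 := by
  have deriv_succ (m : ℕ) (l : ℝ) :
      deriv (gegenbauerCt (m + 1) l) = fun y => 2 * gegenbauerCt m (l + 1) y :=
    funext fun y => (hasDerivAt_gegenbauerCt m l y).deriv
  rcases n with _ | _ | n
  · simp [funext (gegenbauerCt_zero l)]
  · simp only [deriv_succ, gegenbauerCt_zero, zero_add, gegenbauerCt_one, deriv_const]
    push_cast
    ring
  · simp only [deriv_succ, deriv_const_mul_field]
    rw [show l + 1 + 1 = l + 2 by ring]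
    push_cast
    linear_combination gegenbauerCt_recurrence n x hl

lemma gegenbauerCt_at_one_succ {l : ℝ} (hl : 0 < l) :
    (n + 1 : ℝ) * (n + 1 + 2 * l) * gegenbauerCt (n + 1) l 1
      = 2 * (2 * l + 1) * gegenbauerCt n (l + 1) 1 := by
  have h := gegenbauerCt_ode (n + 1) 1 hl
  rw [(hasDerivAt_gegenbauerCt n l 1).deriv] at h
  push_cast at h
  linear_combination h

lemma gegenbauerCt_at_one {l : ℝ} (hl : 0 < l) :
    gegenbauerCt n l 1 = Gamma l * Gamma (n + 2 * l) / (n.factorial * Gamma (2 * l)) := by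
  induction n generalizing l with
  | zero =>
    have : Gamma (2 * l) ≠ 0 := by positivity
    rw [gegenbauerCt_zero, Nat.cast_zero, zero_add, Nat.factorial_zero]
    field_simp
    simp
  | succ n ih =>
    have hrec := gegenbauerCt_at_one_succ n hl
    have hl2 : Gamma (2 * (l + 1)) = (2 * l + 1) * (2 * l * Gamma (2 * l)) := by
      rw [show 2 * (l + 1) = (2 * l + 1) + 1 by ring, Gamma_add_one (by positivity),
        Gamma_add_one (by positivity)]
    have hnl : Gamma (n + 2 * (l + 1)) = (n + 1 + 2 * l) * Gamma (n + 1 + 2 * l) := by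
      rw [← Gamma_add_one (by positivity)]
      ring_nf
    rw [ih (by positivity), Gamma_add_one hl.ne', hl2, hnl] at hrec
    have : Gamma (2 * l) ≠ 0 := by positivity
    have hne : (n : ℝ) + 1 + 2 * l ≠ 0 := by positivity
    rw [Nat.factorial_succ]
    push_cast
    field_simp at hrec ⊢
    exact hrec

lemma gegenbauerCt_at_one_pos {l : ℝ} (hl : 0 < l) : 0 < gegenbauerCt n l 1 := by
  rw [gegenbauerCt_at_one n hl]
  positivity

lemma gegenbauerCt_neg_one : gegenbauerCt n l (-1) = (-1) ^ n * gegenbauerCt n l 1 := by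
  unfold gegenbauerCt
  rw [Finset.mul_sum]
  refine Finset.sum_congr rfl fun k hk => ?_
  have hk : 2 * k ≤ n := by have := Finset.mem_range.1 hk; lia
  obtain ⟨m, rfl⟩ := Nat.exists_eq_add_of_le hk
  rw [Nat.add_sub_cancel_left, mul_neg_one, mul_one, neg_pow (2 : ℝ), pow_add, pow_mul]
  simp only [even_two, Even.neg_pow, one_pow]
  ring

end Gegenbauer

/-! ### Decay at infinity -/

section DecayAtInfinity

lemma quadForm_lower_bound {α β γ δ K : ℝ} (hα : |α| ≤ K) (hβ : |β| ≤ K) (hγ : |γ| ≤ 1 / 2)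
    (hδ : |δ| ≤ 1 / 8) (u a b : ℝ) :
    a ^ 2 / 2 - 3 * K ^ 2 * u ^ 2 ≤
      a ^ 2 + b ^ 2 + α * u * b + β * u * a + γ * a * b + δ * a ^ 2 := by
  have hα2 : α ^ 2 * u ^ 2 ≤ K ^ 2 * u ^ 2 :=
    mul_le_mul_of_nonneg_right (sq_le_sq.2 (hα.trans (le_abs_self K))) (sq_nonneg u)
  have hβ2 : β ^ 2 * u ^ 2 ≤ K ^ 2 * u ^ 2 :=
    mul_le_mul_of_nonneg_right (sq_le_sq.2 (hβ.trans (le_abs_self K))) (sq_nonneg u)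
  have hγ2 : γ ^ 2 * a ^ 2 ≤ (1 / 2) ^ 2 * a ^ 2 :=
    mul_le_mul_of_nonneg_right (sq_le_sq.2 (hγ.trans (le_abs_self _))) (sq_nonneg a)
  have hδ2 : -(1 / 8) * a ^ 2 ≤ δ * a ^ 2 := by gcongr; linarith [(abs_le.1 hδ).1]
  nlinarith [sq_nonneg (α * u + b), sq_nonneg (4 * β * u + a), sq_nonneg (2 * γ * a + b),
    sq_nonneg (K * u), sq_nonneg b, sq_nonneg a]

lemma intervalIntegrable_cutoff_mul {f : ℝ → ℝ} {R₀ R : ℝ} (hfc : ContinuousOn f (Ici R₀))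
    (hR : R₀ ≤ R) : IntervalIntegrable (fun x => (1 - x / R) ^ 4 * f x) volume R₀ R := by
  have hcut : Continuous fun x : ℝ => (1 - x / R) ^ 4 := by fun_prop
  exact (uIcc_of_le hR ▸ hcut.continuousOn.mul
    (hfc.mono Icc_subset_Ici_self)).intervalIntegrable

lemma integral_norm_half_le_integral_cutoff_mul {f : ℝ → ℝ} {R₀ R : ℝ} (hR₀ : 0 < R₀)
    (hR : 2 * R₀ ≤ R) (hfc : ContinuousOn f (Ici R₀)) (hf : ∀ x ≥ R₀, 0 ≤ f x) :
    ∫ x in R₀..R / 2, ‖f x‖ ≤ 16 * ∫ x in R₀..R, (1 - x / R) ^ 4 * f x := by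
  have hcutInt := intervalIntegrable_cutoff_mul hfc (by linarith : R₀ ≤ R)
  rw [← intervalIntegral.integral_const_mul]
  calc ∫ x in R₀..R / 2, ‖f x‖ ≤ ∫ x in R₀..R / 2, 16 * ((1 - x / R) ^ 4 * f x) := by
        refine intervalIntegral.integral_mono_on (by linarith) ?_ ?_ fun x hx => ?_
        · exact (uIcc_of_le (by linarith : R₀ ≤ R / 2) ▸
            hfc.mono Icc_subset_Ici_self).intervalIntegrable.norm
        · exact (hcutInt.const_mul 16).mono_set (by
            rw [uIcc_of_le (by linarith), uIcc_of_le (by linarith)]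
            exact Icc_subset_Icc_right (by linarith))
        · have hxR : 1 / 2 ≤ 1 - x / R := by
            rw [le_sub_comm, div_le_iff₀ (by linarith)]
            linarith [hx.2]
          have hpow : (1 / 2) ^ 4 ≤ (1 - x / R) ^ 4 := by gcongr
          rw [Real.norm_of_nonneg (hf x hx.1), ← mul_assoc]
          exact le_mul_of_one_le_left (hf x hx.1) (by linarith)
    _ ≤ ∫ x in R₀..R, 16 * ((1 - x / R) ^ 4 * f x) := by
        refine intervalIntegral.integral_mono_interval le_rfl (by linarith) (by linarith) ?_
          (hcutInt.const_mul 16)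
        filter_upwards [ae_restrict_mem measurableSet_Ioc] with x hx
        have := hf x hx.1.le
        simp only [Pi.zero_apply]
        positivity

lemma integrableOn_Ioi_of_cutoff_energy {f g : ℝ → ℝ} {H : ℝ → ℝ → ℝ} {R₀ Q : ℝ}
    (hR₀ : 0 < R₀) (hfc : ContinuousOn f (Ici R₀)) (hf : ∀ x ≥ R₀, 0 ≤ f x)
    (hg : IntegrableOn g (Ioi R₀)) (hg0 : ∀ x, 0 ≤ g x)
    (hH : ∀ R ≥ R₀, ∀ x ∈ Icc R₀ R, DifferentiableAt ℝ (H R) x)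
    (hle : ∀ R ≥ R₀, ∀ x ∈ Icc R₀ R, (1 - x / R) ^ 4 * f x - g x ≤ deriv (H R) x)
    (hend : ∀ R ≥ R₀, H R R = 0) (hstart : ∀ R ≥ R₀, |H R R₀| ≤ Q) :
    IntegrableOn f (Ioi R₀) := by
  refine integrableOn_Ioi_of_intervalIntegral_norm_bounded (16 * ((∫ x in Ioi R₀, g x) + Q)) R₀
    (b := fun R : ℝ => R / 2) (l := atTop) (fun R => ?_) (tendsto_id.atTop_div_const two_pos) ?_
  · exact ((hfc.mono Icc_subset_Ici_self).integrableOn_Icc).mono_set Ioc_subset_Icc_self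
  filter_upwards [eventually_ge_atTop (2 * R₀)] with R hR
  have hR' : R₀ ≤ R := by linarith
  have hcutInt := intervalIntegrable_cutoff_mul hfc hR'
  have hgInt : IntervalIntegrable g volume R₀ R :=
    (intervalIntegrable_iff_integrableOn_Ioc_of_le hR').2 (hg.mono_set Ioc_subset_Ioi_self)
  have hcutg : ∫ x in R₀..R, ((1 - x / R) ^ 4 * f x - g x) ≤ H R R - H R R₀ := by
    refine intervalIntegral.integral_le_sub_of_hasDeriv_right_of_le hR'
      (fun x hx => (hH R hR' x hx).continuousAt.continuousWithinAt)
      (fun x hx => (hH R hR' x (Ioo_subset_Icc_self hx)).hasDerivAt.hasDerivWithinAt) ?_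
      (fun x hx => hle R hR' x (Ioo_subset_Icc_self hx))
    rw [integrableOn_Icc_iff_integrableOn_Ioc]
    exact (intervalIntegrable_iff_integrableOn_Ioc_of_le hR').1 (hcutInt.sub hgInt)
  have hgle : ∫ x in R₀..R, g x ≤ ∫ x in Ioi R₀, g x := by
    rw [intervalIntegral.integral_of_le hR']
    exact setIntegral_mono_set hg (.of_forall hg0) Ioc_subset_Ioi_self.eventuallyLE
  have hhalf := integral_norm_half_le_integral_cutoff_mul hR₀ hR hfc hf
  rw [intervalIntegral.integral_sub hcutInt hgInt, hend R hR'] at hcutg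
  linarith [neg_le_of_abs_le (hstart R hR')]

lemma not_integrableOn_Ioi_of_le {g : ℝ → ℝ} {a x₁ ε : ℝ} (hε : 0 < ε) (h : ∀ x ≥ x₁, ε ≤ g x) :
    ¬ IntegrableOn g (Ioi a) := by
  intro hg
  have hconst : IntegrableOn (fun _ : ℝ => ε) (Ioi (max a x₁)) := by
    refine (hg.mono_set (Ioi_subset_Ioi (le_max_left _ _))).mono' aestronglyMeasurable_const ?_
    filter_upwards [ae_restrict_mem measurableSet_Ioi] with x hx
    rw [Real.norm_of_nonneg hε.le]
    exact h x ((le_max_right _ _).trans (le_of_lt hx))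
  simp [integrableOn_const_iff, hε.ne'] at hconst

section PerturbedExponential

variable {X : ℝ} {u u₁ e v v₁ f : ℝ → ℝ}
  (hu : ∀ x ≥ X, HasDerivAt u (u₁ x) x) (hu₁ : ∀ x ≥ X, HasDerivAt u₁ (u x + e x) x)
  (hv : ∀ x ≥ X, HasDerivAt v (v₁ x) x) (hv₁ : ∀ x ≥ X, HasDerivAt v₁ (v x + f x) x)
  (hef : ∀ x ≥ X, e x ^ 2 + f x ^ 2 ≤ (u x ^ 2 + u₁ x ^ 2 + v x ^ 2 + v₁ x ^ 2) / 4)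
  (h_int : IntegrableOn (fun x => u x ^ 2 + v x ^ 2) (Ioi X))

include hu hu₁ hv hv₁ hef h_int

-- `u² + v²` is convex, so once it starts to increase it is not integrable.
lemma mul_deriv_nonpos_of_integrable {x : ℝ} (hx : X ≤ x) : u x * u₁ x + v x * v₁ x ≤ 0 := by
  have hΦ : ∀ y ≥ X, HasDerivAt (fun y => u y * u₁ y + v y * v₁ y)
      (u₁ y * u₁ y + u y * (u y + e y) + (v₁ y * v₁ y + v y * (v y + f y))) y := fun y hy =>
    ((hu y hy).mul (hu₁ y hy)).add ((hv y hy).mul (hv₁ y hy))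
  have hΦmono : MonotoneOn (fun y => u y * u₁ y + v y * v₁ y) (Ici X) := by
    refine monotoneOn_of_hasDerivWithinAt_nonneg (convex_Ici X)
      (fun y hy => (hΦ y hy).continuousAt.continuousWithinAt)
      (fun y hy => (hΦ y (interior_subset hy)).hasDerivWithinAt) fun y hy => ?_
    nlinarith [hef y (interior_subset hy), sq_nonneg (u y + e y), sq_nonneg (v y + f y),
      sq_nonneg (u₁ y), sq_nonneg (v₁ y), sq_nonneg (u y), sq_nonneg (v y)]
  by_contra! hpos
  set c := u x * u₁ x + v x * v₁ x
  have hsq : ∀ y ≥ X, HasDerivAt (fun y => u y ^ 2 + v y ^ 2)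
      (2 * (u y * u₁ y + v y * v₁ y)) y := fun y hy => by
    convert! ((hu y hy).pow 2).add ((hv y hy).pow 2) using 1
    push_cast
    ring
  refine not_integrableOn_Ioi_of_le (x₁ := x + 1) (ε := 2 * c) (by positivity)
    (fun y hy => ?_) h_int
  have hgrow : 2 * c * (y - x) ≤ u y ^ 2 + v y ^ 2 - (u x ^ 2 + v x ^ 2) := by
    refine (convex_Icc x y).mul_sub_le_image_sub_of_le_deriv
      (f := fun y => u y ^ 2 + v y ^ 2)
      (fun z hz => (hsq z (hx.trans hz.1)).continuousAt.continuousWithinAt)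
      (fun z hz =>
        (hsq z (hx.trans (interior_subset hz).1)).differentiableAt.differentiableWithinAt)
      (fun z hz => ?_) x (by constructor <;> linarith) y (by constructor <;> linarith) (by linarith)
    rw [(hsq z (hx.trans (interior_subset hz).1)).deriv]
    have := hΦmono hx (hx.trans (interior_subset hz).1) (interior_subset hz).1
    simp only at this
    linarith
  nlinarith [sq_nonneg (u x), sq_nonneg (v x)]

lemma exists_exp_bound_of_integrable :
    ∃ C, ∀ x ≥ X, u x ^ 2 + u₁ x ^ 2 + v x ^ 2 + v₁ x ^ 2 ≤ C * exp (-x) := by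
  have hΦ := fun x hx => mul_deriv_nonpos_of_integrable hu hu₁ hv hv₁ hef h_int (x := x) hx
  have hN : ∀ x ≥ X, HasDerivAt
      (fun x => exp x * ((u x - u₁ x) ^ 2 + (v x - v₁ x) ^ 2))
      (exp x * ((u x - u₁ x) ^ 2 + (v x - v₁ x) ^ 2 +
        2 * ((u x - u₁ x) * (u₁ x - u x - e x) + (v x - v₁ x) * (v₁ x - v x - f x)))) x :=
    fun x hx => by
    convert! (Real.hasDerivAt_exp x).mul ((((hu x hx).sub (hu₁ x hx)).pow 2).add
      (((hv x hx).sub (hv₁ x hx)).pow 2)) using 1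
    simp only [Pi.add_apply, Pi.pow_apply, Pi.sub_apply]
    push_cast
    ring
  have hanti : AntitoneOn (fun x => exp x * ((u x - u₁ x) ^ 2 + (v x - v₁ x) ^ 2)) (Ici X) := by
    refine antitoneOn_of_hasDerivWithinAt_nonpos (convex_Ici X)
      (fun x hx => (hN x hx).continuousAt.continuousWithinAt)
      (fun x hx => (hN x (interior_subset hx)).hasDerivWithinAt) fun x hx => ?_
    refine mul_nonpos_of_nonneg_of_nonpos (exp_pos x).le ?_
    nlinarith [hef x (interior_subset hx), hΦ x (interior_subset hx),
      sq_nonneg (u x - u₁ x + 2 * e x), sq_nonneg (v x - v₁ x + 2 * f x)]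
  refine ⟨exp X * ((u X - u₁ X) ^ 2 + (v X - v₁ X) ^ 2), fun x hx => ?_⟩
  have hle := hanti self_mem_Ici hx hx
  rw [exp_neg, ← div_eq_mul_inv, le_div_iff₀' (exp_pos x)]
  refine (mul_le_mul_of_nonneg_left ?_ (exp_pos x).le).trans hle
  linarith [hΦ x hx]

end PerturbedExponential

lemma perturbation_sq_le {m c lam x : ℝ} (hx : 8 + 12 * (lam ^ 2 + m ^ 2 + c ^ 2) ≤ x)
    (u u₁ v v₁ : ℝ) :
    ((v - u₁) / x) ^ 2 + (lam * u / x - m * v₁ / x - c * v / x ^ 2) ^ 2 ≤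
      (u ^ 2 + u₁ ^ 2 + v ^ 2 + v₁ ^ 2) / 4 := by
  have hx1 : 1 ≤ x := by linarith [sq_nonneg lam, sq_nonneg m, sq_nonneg c]
  have hvx : (c * (v / x)) ^ 2 ≤ c ^ 2 * v ^ 2 := by
    rw [mul_pow, div_pow]
    gcongr
    exact div_le_self (sq_nonneg v) (one_le_pow₀ hx1)
  have hsum : (v - u₁) ^ 2 + (lam * u - m * v₁ - c * (v / x)) ^ 2 ≤
      (2 + 3 * (lam ^ 2 + m ^ 2 + c ^ 2)) * (u ^ 2 + u₁ ^ 2 + v ^ 2 + v₁ ^ 2) := by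
    have hprod : 0 ≤ (lam ^ 2 + m ^ 2 + c ^ 2) * (u ^ 2 + u₁ ^ 2 + v ^ 2 + v₁ ^ 2) -
        (lam ^ 2 * u ^ 2 + m ^ 2 * v₁ ^ 2 + c ^ 2 * v ^ 2) := by
      ring_nf
      positivity
    linarith [sq_nonneg (v + u₁), sq_nonneg (lam * u + m * v₁), sq_nonneg (lam * u + c * (v / x)),
      sq_nonneg (m * v₁ - c * (v / x)), sq_nonneg u, sq_nonneg v₁]
  calc ((v - u₁) / x) ^ 2 + (lam * u / x - m * v₁ / x - c * v / x ^ 2) ^ 2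
      = ((v - u₁) ^ 2 + (lam * u - m * v₁ - c * (v / x)) ^ 2) / x ^ 2 := by field_simp
    _ ≤ (2 + 3 * (lam ^ 2 + m ^ 2 + c ^ 2)) * (u ^ 2 + u₁ ^ 2 + v ^ 2 + v₁ ^ 2) / x ^ 2 := by gcongr
    _ ≤ (u ^ 2 + u₁ ^ 2 + v ^ 2 + v₁ ^ 2) / 4 := by
      rw [div_le_iff₀ (by positivity)]
      nlinarith [mul_le_mul_of_nonneg_right (hx.trans (le_self_pow₀ hx1 two_ne_zero))
        (by positivity : 0 ≤ u ^ 2 + u₁ ^ 2 + v ^ 2 + v₁ ^ 2)]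

/-- The system satisfied by `u`, `v = w / x` and their derivatives, where `w = θ²u - x²u` and `u`
solves the fourth-order equation; dividing `w` by `x` makes all perturbing coefficients `O(1/x)`. -/
structure IsNormalizedSystem (m c lam : ℝ) (u u₁ v v₁ : ℝ → ℝ) : Prop where
  hu : ∀ x > 0, HasDerivAt u (u₁ x) x
  hu₁ : ∀ x > 0, HasDerivAt u₁ (u x - u₁ x / x + v x / x) x
  hv : ∀ x > 0, HasDerivAt v (v₁ x) x
  hv₁ : ∀ x > 0, HasDerivAt v₁ (v x + lam * u x / x - m * v₁ x / x - c * v x / x ^ 2) x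

lemma localizedEnergy_coeff_bounds {m c lam r x R y : ℝ} (hr0 : 0 ≤ r) (hr1 : r ≤ 1) (hy0 : 0 ≤ y)
    (hy1 : y ≤ 1) (hx1 : 1 ≤ x) (hxm : 2 * |m| + 12 ≤ x) (hxc : 8 * |c| ≤ x) (hxR : x ≤ R) :
    |r * (m - 1) + y * 8| ≤ |m - 1| + |c| + |lam| + 16 ∧
    |r ^ 2 * c / x + (r * 4 / R - y * 12 / R) + r ^ 4 * lam / x| ≤ |m - 1| + |c| + |lam| + 16 ∧
    |-(r * m / x + 6 / R)| ≤ 1 / 2 ∧ |-(r ^ 2 * c / x ^ 2)| ≤ 1 / 8 := by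
  have hx0 : 0 < x := by linarith
  have hdiv {p z : ℝ} (hp0 : 0 ≤ p) (hp1 : p ≤ 1) (hz : 1 ≤ z) (q : ℝ) :
      |p * q / z| ≤ |q| := by
    rw [abs_div, abs_mul, abs_of_nonneg hp0, abs_of_pos (by linarith : 0 < z)]
    exact (div_le_self (by positivity) hz).trans (mul_le_of_le_one_left (abs_nonneg q) hp1)
  have hr (k : ℕ) : 0 ≤ r ^ k ∧ r ^ k ≤ 1 := ⟨pow_nonneg hr0 k, pow_le_one₀ hr0 hr1⟩
  have hm := hdiv hr0 hr1 le_rfl (m - 1)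
  have hc := hdiv (hr 2).1 (hr 2).2 hx1 c
  have hlam := hdiv (hr 4).1 (hr 4).2 hx1 lam
  have hR4 := hdiv hr0 hr1 (hx1.trans hxR) 4
  have hR12 := hdiv hy0 hy1 (hx1.trans hxR) 12
  have hmx : |r * m / x| ≤ |m| / x := by
    simpa [mul_div_assoc, abs_div, abs_of_pos hx0] using hdiv hr0 hr1 le_rfl (m / x)
  have hcx : |r ^ 2 * c / x ^ 2| ≤ |c| / x := by
    have := hdiv (hr 2).1 (hr 2).2 hx1 (c / x)
    rwa [abs_div c, abs_of_pos hx0, mul_div_assoc', div_div, ← sq] at this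
  have h6 : 6 / R ≤ 6 / x := by gcongr
  have hhalf : |m| / x + 6 / x ≤ 1 / 2 := by
    rw [← add_div, div_le_iff₀ hx0]
    linarith
  have heighth : |c| / x ≤ 1 / 8 := by
    rw [div_le_iff₀ hx0]
    linarith
  have h60 : 0 ≤ 6 / R := div_nonneg (by norm_num) (by linarith)
  have h8 := hdiv hy0 hy1 le_rfl 8
  rw [div_one] at hm h8
  simp only [Nat.abs_ofNat] at hR4 hR12 h8
  have hβ := (abs_sub _ _).trans (add_le_add hR4 hR12)
  rw [abs_neg, abs_neg]
  refine ⟨(abs_add_le _ _).trans ?_, (abs_add_three _ _ _).trans ?_, (abs_add_le _ _).trans ?_,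
    hcx.trans heighth⟩
  · linarith [abs_nonneg c, abs_nonneg lam]
  · linarith [abs_nonneg (m - 1)]
  · rw [abs_of_nonneg h60]
    linarith

/-- The localized energy: the boundary form `x (v u' - v' u)` cut off at `R`, corrected so that its
derivative controls `v²` by `u²` alone. -/
def localizedEnergy (u u₁ v v₁ : ℝ → ℝ) (R x : ℝ) : ℝ :=
  (1 - x / R) ^ 4 * (x * (v x * u₁ x - v₁ x * u x)) + (4 * x / R) * (1 - x / R) ^ 3 * (u x * v x)
    + (1 - x / R) ^ 6 * (v x * v₁ x)

lemma abs_localizedEnergy_le {u u₁ v v₁ : ℝ → ℝ} {R x : ℝ} (hx : 0 < x) (hxR : x ≤ R) :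
    |localizedEnergy u u₁ v v₁ R x| ≤
      |x * (v x * u₁ x - v₁ x * u x)| + 4 * |u x * v x| + |v x * v₁ x| := by
  have hy0 : 0 ≤ x / R := div_nonneg hx.le (hx.le.trans hxR)
  have hy1 : x / R ≤ 1 := div_le_one_of_le₀ hxR (hx.le.trans hxR)
  have hpow (k : ℕ) : |(1 - x / R) ^ k| ≤ 1 := by
    rw [abs_pow, abs_of_nonneg (by linarith)]
    exact pow_le_one₀ (by linarith) (by linarith)
  have hlin : |4 * x / R| ≤ 4 := by
    rw [mul_div_assoc, abs_of_nonneg (by linarith)]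
    linarith
  unfold localizedEnergy
  refine (abs_add_three _ _ _).trans ?_
  simp only [abs_mul ((1 - x / R) ^ _), abs_mul _ (u x * v x), abs_mul (4 * x / R)]
  gcongr
  · exact mul_le_of_le_one_left (abs_nonneg _) (hpow 4)
  · exact (mul_le_of_le_one_right (abs_nonneg _) (hpow 3)).trans hlin
  · exact mul_le_of_le_one_left (abs_nonneg _) (hpow 6)

namespace IsNormalizedSystem

variable {m c lam : ℝ} {u u₁ v v₁ : ℝ → ℝ} (h : IsNormalizedSystem m c lam u u₁ v v₁)

include h

lemma hasDerivAt_localizedEnergy {R x : ℝ} (hR : R ≠ 0) (hx : 0 < x) {r : ℝ} (hr : r = 1 - x / R) :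
    HasDerivAt (localizedEnergy u u₁ v v₁ R)
      ((r ^ 2 * v x) ^ 2 + (r ^ 3 * v₁ x) ^ 2 + (r * (m - 1) + x / R * 8) * u x * (r ^ 3 * v₁ x)
        + (r ^ 2 * c / x + (r * 4 / R - x / R * 12 / R) + r ^ 4 * lam / x) * u x * (r ^ 2 * v x)
        + -(r * m / x + 6 / R) * (r ^ 2 * v x) * (r ^ 3 * v₁ x)
        + -(r ^ 2 * c / x ^ 2) * (r ^ 2 * v x) ^ 2
        + ((r ^ 3 * v x) ^ 2 - lam * r ^ 4 * u x ^ 2)) x := by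
  subst hr
  have hcut : HasDerivAt (fun x : ℝ => 1 - x / R) (-(1 / R)) x := by
    simpa using ((hasDerivAt_id x).div_const R).const_sub 1
  have hlin : HasDerivAt (fun x : ℝ => 4 * x / R) (4 / R) x := by
    simpa using ((hasDerivAt_id x).const_mul 4).div_const R
  have hbdry := (hcut.pow 4).mul ((hasDerivAt_id x).mul
    (((h.hv x hx).mul (h.hu₁ x hx)).sub ((h.hv₁ x hx).mul (h.hu x hx))))
  have huv := (hlin.mul (hcut.pow 3)).mul ((h.hu x hx).mul (h.hv x hx))
  have hvv := (hcut.pow 6).mul ((h.hv x hx).mul (h.hv₁ x hx))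
  convert! (hbdry.add huv).add hvv using 1
  simp only [Pi.mul_apply, Pi.pow_apply, Pi.sub_apply, id]
  push_cast
  field_simp
  ring

lemma le_deriv_localizedEnergy {R x : ℝ} (hx1 : 1 ≤ x) (hxm : 2 * |m| + 12 ≤ x)
    (hxc : 8 * |c| ≤ x) (hxR : x ≤ R) :
    (1 - x / R) ^ 4 * (v x ^ 2 / 2)
        - (3 * (|m - 1| + |c| + |lam| + 16) ^ 2 + |lam|) * u x ^ 2 ≤
      deriv (localizedEnergy u u₁ v v₁ R) x := by
  have hx0 : 0 < x := by linarith
  have hR0 : 0 < R := by linarith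
  obtain ⟨r, hr⟩ : ∃ r, r = 1 - x / R := ⟨_, rfl⟩
  have hy0 : 0 ≤ x / R := by positivity
  have hy1 : x / R ≤ 1 := div_le_one_of_le₀ hxR hR0.le
  have hr0 : 0 ≤ r := by linarith
  have hr1 : r ≤ 1 := by linarith
  obtain ⟨hα, hβ, hγ, hδ⟩ := localizedEnergy_coeff_bounds (lam := lam) hr0 hr1 hy0 hy1 hx1 hxm hxc
    hxR
  have hquad := quadForm_lower_bound hα hβ hγ hδ (u x) (r ^ 2 * v x) (r ^ 3 * v₁ x)
  have hlam : lam * r ^ 4 * u x ^ 2 ≤ |lam| * u x ^ 2 := by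
    gcongr
    exact (mul_le_mul_of_nonneg_right (le_abs_self lam) (by positivity)).trans
      (mul_le_of_le_one_right (abs_nonneg lam) (pow_le_one₀ hr0 hr1))
  rw [(h.hasDerivAt_localizedEnergy hR0.ne' hx0 hr).deriv, ← hr]
  linarith [sq_nonneg (r ^ 3 * v x)]

lemma exists_integrableOn_sq (hL2 : IntegrableOn (fun x => u x ^ 2) (Ioi 1)) :
    ∃ R₀ ≥ 1, IntegrableOn (fun x => v x ^ 2) (Ioi R₀) := by
  set R₀ : ℝ := 2 * |m| + 12 + 8 * |c|
  have hm := abs_nonneg m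
  have hc := abs_nonneg c
  have hR₀0 : 0 < R₀ := by positivity
  refine ⟨R₀, by linarith, ?_⟩
  have hvc : ContinuousOn v (Ici R₀) := fun x hx =>
    (h.hv x (hR₀0.trans_le hx)).continuousAt.continuousWithinAt
  have hhalf : IntegrableOn (fun x => v x ^ 2 / 2) (Ioi R₀) := by
    refine integrableOn_Ioi_of_cutoff_energy (H := localizedEnergy u u₁ v v₁)
      (Q := |R₀ * (v R₀ * u₁ R₀ - v₁ R₀ * u R₀)| + 4 * |u R₀ * v R₀| + |v R₀ * v₁ R₀|)
      (g := fun x => (3 * (|m - 1| + |c| + |lam| + 16) ^ 2 + |lam|) * u x ^ 2) hR₀0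
      ((hvc.pow 2).div_const 2) (fun x _ => by positivity)
      ((hL2.mono_set (Ioi_subset_Ioi (by linarith))).const_mul _) (fun x => by positivity)
      (fun R hR x hx => ?_) (fun R _ x hx => ?_) (fun R hR => ?_) (fun R hR => ?_)
    · exact (h.hasDerivAt_localizedEnergy (hR₀0.trans_le hR).ne' (hR₀0.trans_le hx.1)
        rfl).differentiableAt
    · exact h.le_deriv_localizedEnergy (by linarith [hx.1]) (by linarith [hx.1])
        (by linarith [hx.1]) hx.2
    · simp [localizedEnergy, div_self (hR₀0.trans_le hR).ne']
    · exact abs_localizedEnergy_le hR₀0 hR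
  exact (hhalf.const_mul 2).congr (.of_forall fun x => mul_div_cancel₀ _ two_ne_zero)

lemma isBigO_exp_neg_half (hL2 : IntegrableOn (fun x => u x ^ 2) (Ioi 1)) :
    (u =O[atTop] fun x => exp (-x / 2)) ∧ (u₁ =O[atTop] fun x => exp (-x / 2)) ∧
      (v =O[atTop] fun x => exp (-x / 2)) ∧ v₁ =O[atTop] fun x => exp (-x / 2) := by
  obtain ⟨R₀, hR₀, hvint⟩ := h.exists_integrableOn_sq hL2
  set X := max R₀ (8 + 12 * (lam ^ 2 + m ^ 2 + c ^ 2))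
  have hpos {x : ℝ} (hx : x ≥ X) : 0 < x := by linarith [le_of_max_le_left hx]
  obtain ⟨C, hC⟩ := exists_exp_bound_of_integrable
    (e := fun x => (v x - u₁ x) / x)
    (f := fun x => lam * u x / x - m * v₁ x / x - c * v x / x ^ 2)
    (fun x hx => h.hu x (hpos hx))
    (fun x hx => by convert! h.hu₁ x (hpos hx) using 1; ring)
    (fun x hx => h.hv x (hpos hx))
    (fun x hx => by convert! h.hv₁ x (hpos hx) using 1; ring)
    (fun x hx => perturbation_sq_le (le_of_max_le_right hx) _ _ _ _)
    ((hL2.mono_set (Ioi_subset_Ioi (hR₀.trans (le_max_left _ _)))).add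
      (hvint.mono_set (Ioi_subset_Ioi (le_max_left _ _))))
  have hexp (x : ℝ) : exp (-x) = exp (-x / 2) ^ 2 := by
    rw [← exp_nat_mul]
    push_cast
    ring_nf
  have hsqrt {f : ℝ → ℝ} (hf : ∀ x ≥ X, f x ^ 2 ≤ u x ^ 2 + u₁ x ^ 2 + v x ^ 2 + v₁ x ^ 2) :
      f =O[atTop] fun x => exp (-x / 2) := by
    refine .of_pow two_ne_zero (.of_bound C ?_)
    filter_upwards [eventually_ge_atTop X] with x hx
    simp only [Pi.pow_apply, norm_pow, Real.norm_eq_abs, sq_abs, ← hexp, abs_exp]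
    exact (hf x hx).trans (hC x hx)
  refine ⟨hsqrt fun x _ => ?_, hsqrt fun x _ => ?_, hsqrt fun x _ => ?_, hsqrt fun x _ => ?_⟩ <;>
    linarith [sq_nonneg (u x), sq_nonneg (u₁ x), sq_nonneg (v x), sq_nonneg (v₁ x)]

end IsNormalizedSystem

/-- The system satisfied by `u`, `w = θ²u - x²u` and their derivatives when `u` solves
`D_{μ,0} u = lam u`. -/
structure IsDopSystem (μ : ℕ) (lam : ℝ) (u u₁ w w₁ : ℝ → ℝ) : Prop where
  hu : ∀ x > 0, HasDerivAt u (u₁ x) x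
  hu₁ : ∀ x > 0, HasDerivAt u₁ (u x - u₁ x / x + w x / x ^ 2) x
  hw : ∀ x > 0, HasDerivAt w (w₁ x) x
  hw₁ : ∀ x > 0, HasDerivAt w₁
    (w x + lam * u x - (2 * μ + 1) * w₁ x / x - μ ^ 2 * w x / x ^ 2) x

namespace IsDopSystem

variable {μ : ℕ} {lam : ℝ} {u u₁ w w₁ : ℝ → ℝ} (h : IsDopSystem μ lam u u₁ w w₁)

include h

lemma normalized : IsNormalizedSystem (2 * μ + 3) ((μ + 1) ^ 2) lam u u₁ (fun x => w x / x)
    (fun x => w₁ x / x - w x / x ^ 2) where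
  hu := h.hu
  hu₁ x hx := by
    convert h.hu₁ x hx using 1
    field_simp
  hv x hx := by
    convert! (h.hw x hx).div (hasDerivAt_id x) hx.ne' using 1
    simp only [id]
    field_simp
  hv₁ x hx := by
    convert! ((h.hw₁ x hx).div (hasDerivAt_id x) hx.ne').sub
      ((h.hw x hx).div ((hasDerivAt_id x).pow 2) (by simp [hx.ne'])) using 1
    simp only [id, Pi.pow_apply]
    push_cast
    field_simp
    ring

lemma isBigO_exp_neg (hL2 : IntegrableOn (fun x => u x ^ 2) (Ioi 1)) (k : ℕ) :
    ((fun x => x ^ k * u x) =O[atTop] fun x => exp (-x / 4)) ∧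
      ((fun x => x ^ k * u₁ x) =O[atTop] fun x => exp (-x / 4)) ∧
      ((fun x => x ^ k * w x) =O[atTop] fun x => exp (-x / 4)) ∧
      (fun x => x ^ k * w₁ x) =O[atTop] fun x => exp (-x / 4) := by
  obtain ⟨hu, hu₁, hv, hv₁⟩ := h.normalized.isBigO_exp_neg_half hL2
  have hpow (k : ℕ) {f : ℝ → ℝ} (hf : f =O[atTop] fun x => exp (-x / 2)) :
      (fun x => x ^ k * f x) =O[atTop] fun x => exp (-x / 4) := by
    have hk : (fun x : ℝ => x ^ k) =O[atTop] fun x => exp (1 / 4 * x) :=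
      (isLittleO_pow_exp_pos_mul_atTop k (by norm_num)).isBigO
    refine (hk.mul hf).congr_right fun x => ?_
    rw [← exp_add]
    ring_nf
  refine ⟨hpow k hu, hpow k hu₁, (hpow (k + 1) hv).congr' ?_ .rfl,
    ((hpow (k + 1) hv₁).add (hpow k hv)).congr' ?_ .rfl⟩ <;>
  · filter_upwards [eventually_gt_atTop 0] with x hx
    field_simp
    try ring

end IsDopSystem

end DecayAtInfinity

/-! ### Boundary behaviour at the origin -/

section NearZero

variable {f f' g g' : ℝ → ℝ}

lemma exists_le_add_of_deriv_le (hf : ∀ x > 0, HasDerivAt f (f' x) x)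
    (hg : ∀ x > 0, HasDerivAt g (g' x) x) (hle : ∀ᶠ x in 𝓝[>] 0, f' x ≤ g' x) :
    ∃ K, ∀ᶠ x in 𝓝[>] 0, g x ≤ f x + K := by
  obtain ⟨d, hd, hle⟩ := mem_nhdsGT_iff_exists_Ioc_subset.1 hle
  have hmono : MonotoneOn (fun x => g x - f x) (Ioc 0 d) :=
    monotoneOn_of_hasDerivWithinAt_nonneg (convex_Ioc 0 d)
      (fun x hx => ((hg x hx.1).sub (hf x hx.1)).continuousAt.continuousWithinAt)
      (fun x hx => ((hg x (interior_subset hx).1).sub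
        (hf x (interior_subset hx).1)).hasDerivWithinAt)
      fun x hx => sub_nonneg.2 (hle (interior_subset hx))
  refine ⟨g d - f d, ?_⟩
  filter_upwards [Ioc_mem_nhdsGT hd] with x hx
  have := hmono hx (right_mem_Ioc.2 hd) hx.2
  simp only at this
  linarith

lemma exists_le_mul_log_add {c : ℝ} (hf : ∀ x > 0, HasDerivAt f (f' x) x)
    (hle : ∀ᶠ x in 𝓝[>] 0, c ≤ x * f' x) : ∃ K, ∀ᶠ x in 𝓝[>] 0, f x ≤ c * log x + K := by
  refine exists_le_add_of_deriv_le (fun x hx => (hasDerivAt_log hx.ne').const_mul c) hf ?_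
  filter_upwards [hle, self_mem_nhdsWithin] with x hx hx0
  rwa [← div_eq_mul_inv, div_le_iff₀' hx0]

lemma isBigO_of_deriv_isBigO (hf : ∀ x > 0, HasDerivAt f (f' x) x)
    (hg : ∀ x > 0, HasDerivAt g (g' x) x) (hg' : ∀ᶠ x in 𝓝[>] 0, g' x ≤ 0)
    (htop : Tendsto g (𝓝[>] 0) atTop) (hO : f' =O[𝓝[>] 0] g') : f =O[𝓝[>] 0] g := by
  obtain ⟨C, hC⟩ := hO.bound
  have hbound : ∀ᶠ x in 𝓝[>] 0, C * g' x ≤ f' x ∧ C * g' x ≤ -f' x := by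
    filter_upwards [hC, hg'] with x hx hx'
    rw [norm_eq_abs, norm_eq_abs, abs_of_nonpos hx'] at hx
    constructor <;> linarith [neg_abs_le (f' x), le_abs_self (f' x)]
  obtain ⟨K, hK⟩ := exists_le_add_of_deriv_le (fun x hx => (hg x hx).const_mul C) hf
    (hbound.mono fun x hx => hx.1)
  obtain ⟨L, hL⟩ := exists_le_add_of_deriv_le (fun x hx => (hg x hx).const_mul C)
    (fun x hx => (hf x hx).neg) (hbound.mono fun x hx => hx.2)
  refine Asymptotics.IsBigO.of_bound (C + 1) ?_
  filter_upwards [hK, hL, htop.eventually_ge_atTop (max 0 (max K L))] with x hxK hxL hgx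
  obtain ⟨hg0, hgK, hgL⟩ : 0 ≤ g x ∧ K ≤ g x ∧ L ≤ g x := by simpa using hgx
  rw [norm_eq_abs, norm_eq_abs, abs_of_nonneg hg0, abs_le]
  simp only [Pi.neg_apply] at hxL
  constructor <;> linarith

lemma exists_tendsto_of_deriv_isBigO_one (hf : ∀ x > 0, HasDerivAt f (f' x) x)
    (hO : f' =O[𝓝[>] 0] (1 : ℝ → ℝ)) : ∃ l, Tendsto f (𝓝[>] 0) (𝓝 l) := by
  obtain ⟨K, hK0, hK⟩ := hO.exists_nonneg
  obtain ⟨d, hd, hb⟩ := mem_nhdsGT_iff_exists_Ioo_subset.1 hK.bound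
  have hlip : LipschitzOnWith ⟨K, hK0⟩ f (Ioo 0 d) :=
    (convex_Ioo 0 d).lipschitzOnWith_of_nnnorm_hasDerivWithin_le
      (fun x hx => (hf x hx.1).hasDerivWithinAt) fun x hx =>
        show ‖f' x‖ ≤ K by simpa using hb hx
  obtain ⟨F, hF, hfF⟩ := hlip.extend_real
  refine ⟨F 0, ((hF.continuous.tendsto 0).mono_left nhdsWithin_le_nhds).congr' ?_⟩
  filter_upwards [Ioo_mem_nhdsGT hd] with x hx using (hfF hx).symm

lemma tendsto_pow_mul_of_isBigO_log (hf : f =O[𝓝[>] 0] log) {k : ℕ} (hk : k ≠ 0) :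
    Tendsto (fun x => x ^ k * f x) (𝓝[>] 0) (𝓝 0) := by
  refine ((Asymptotics.isBigO_refl (fun x : ℝ => x ^ k) _).mul hf).trans_tendsto ?_
  refine (tendsto_log_mul_rpow_nhdsGT_zero (r := k) (by positivity)).congr fun x => ?_
  rw [rpow_natCast, mul_comm]

end NearZero

lemma hasDerivAt_pow_div (k : ℕ) {x : ℝ} (hx : x ≠ 0) :
    HasDerivAt (fun y : ℝ => y ^ k) (k * x ^ k / x) x := by
  convert! hasDerivAt_pow k x using 1
  rcases k with _ | k
  · simp
  · rw [Nat.add_sub_cancel, pow_succ]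
    field_simp

/-- The flux `x^μ (θ + μ) w` corrected by lower order terms, so that its derivative is a multiple
of `x^(μ+1) u` and involves neither `w` nor `u₁`. -/
def correctedFlux (μ : ℕ) (u u₁ w w₁ : ℝ → ℝ) (x : ℝ) : ℝ :=
  x ^ μ * (x * w₁ x + μ * w x) - x ^ (μ + 2) * (x * u₁ x) + (μ + 2) * x ^ (μ + 2) * u x

namespace IsDopSystem

variable {μ : ℕ} {lam : ℝ} {u u₁ w w₁ : ℝ → ℝ} (h : IsDopSystem μ lam u u₁ w w₁)
include h

protected lemma neg : IsDopSystem μ lam (-u) (-u₁) (-w) (-w₁) where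
  hu x hx := (h.hu x hx).neg
  hu₁ x hx := by
    convert! (h.hu₁ x hx).neg using 1
    simp only [Pi.neg_apply]
    ring
  hw x hx := (h.hw x hx).neg
  hw₁ x hx := by
    convert! (h.hw₁ x hx).neg using 1
    simp only [Pi.neg_apply]
    ring

lemma hasDerivAt_euler_u {x : ℝ} (hx : 0 < x) :
    HasDerivAt (fun x => x * u₁ x) (x * u x + w x / x) x := by
  convert! (hasDerivAt_id x).mul (h.hu₁ x hx) using 1
  simp only [id]
  field_simp
  ring

lemma hasDerivAt_flux {x : ℝ} (hx : 0 < x) :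
    HasDerivAt (fun x => x ^ μ * (x * w₁ x + μ * w x)) (x ^ (μ + 1) * (w x + lam * u x)) x := by
  convert! (hasDerivAt_pow_div μ hx.ne').mul
    (((hasDerivAt_id x).mul (h.hw₁ x hx)).add ((h.hw x hx).const_mul (μ : ℝ))) using 1
  simp only [id, Pi.mul_apply, Pi.add_apply]
  field_simp
  ring

lemma hasDerivAt_correctedFlux {x : ℝ} (hx : 0 < x) :
    HasDerivAt (correctedFlux μ u u₁ w w₁) (x ^ (μ + 1) * u x * (lam + (μ + 2) ^ 2 - x ^ 2)) x := by
  have hpow := hasDerivAt_pow_div (μ + 2) hx.ne'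
  convert! ((h.hasDerivAt_flux hx).sub (hpow.mul (h.hasDerivAt_euler_u hx))).add
    ((hpow.const_mul ((μ : ℝ) + 2)).mul (h.hu x hx)) using 1
  push_cast
  field_simp
  ring

lemma hasDerivAt_correctedPotential {x : ℝ} (hx : 0 < x) :
    HasDerivAt (fun x => x ^ μ * w x - x ^ (μ + 2) * u x)
      ((correctedFlux μ u u₁ w w₁ x - (2 * μ + 4) * (x ^ (μ + 2) * u x)) / x) x := by
  convert! ((hasDerivAt_pow_div μ hx.ne').mul (h.hw x hx)).sub
    ((hasDerivAt_pow_div (μ + 2) hx.ne').mul (h.hu x hx)) using 1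
  unfold correctedFlux
  push_cast
  field_simp
  ring

variable (hlog : u =O[𝓝[>] 0] log)
include hlog

lemma exists_tendsto_correctedFlux :
    ∃ l, Tendsto (correctedFlux μ u u₁ w w₁) (𝓝[>] 0) (𝓝 l) := by
  refine exists_tendsto_of_deriv_isBigO_one (fun x hx => h.hasDerivAt_correctedFlux hx) ?_
  have hcont : Tendsto (fun x : ℝ => lam + ((μ : ℝ) + 2) ^ 2 - x ^ 2) (𝓝[>] 0)
      (𝓝 (lam + (μ + 2) ^ 2 - 0 ^ 2)) :=
    ((by fun_prop : Continuous fun x : ℝ => lam + ((μ : ℝ) + 2) ^ 2 - x ^ 2).tendsto 0).mono_left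
      nhdsWithin_le_nhds
  exact ((tendsto_pow_mul_of_isBigO_log hlog (Nat.succ_ne_zero μ)).mul hcont).isBigO_one ℝ

omit h in
lemma tendsto_euler_correctedPotential {l : ℝ}
    (hl : Tendsto (correctedFlux μ u u₁ w w₁) (𝓝[>] 0) (𝓝 l)) :
    Tendsto (fun x => correctedFlux μ u u₁ w w₁ x - (2 * μ + 4) * (x ^ (μ + 2) * u x))
      (𝓝[>] 0) (𝓝 l) := by
  simpa using hl.sub ((tendsto_pow_mul_of_isBigO_log hlog (μ + 1).succ_ne_zero).const_mul
    (2 * (μ : ℝ) + 4))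

/- A positive limit would force `x^μ w`, then `θu`, then `u / log x` to be unbounded near `0`. -/
lemma limit_correctedFlux_nonpos {l : ℝ}
    (hl : Tendsto (correctedFlux μ u u₁ w w₁) (𝓝[>] 0) (𝓝 l)) : l ≤ 0 := by
  by_contra! hpos
  have hx1 : ∀ᶠ x : ℝ in 𝓝[>] 0, x ∈ Ioo (0 : ℝ) 1 := Ioo_mem_nhdsGT one_pos
  have hux := tendsto_pow_mul_of_isBigO_log hlog two_ne_zero
  obtain ⟨K, hK⟩ := exists_le_mul_log_add (c := l / 2)
    (fun x hx => h.hasDerivAt_correctedPotential hx) (by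
      filter_upwards [(tendsto_euler_correctedPotential hlog hl).eventually_const_le
        (half_lt_self hpos), hx1] with x hx hx0
      rwa [mul_div_cancel₀ _ hx0.1.ne'])
  have hlogl : Tendsto (fun x => l / 2 * log x + K) (𝓝[>] 0) atBot :=
    tendsto_atBot_add_const_right _ _ (tendsto_log_nhdsGT_zero.const_mul_atBot (by positivity))
  have hw : ∀ᶠ x in 𝓝[>] 0, x ^ 2 * u x + w x ≤ -1 := by
    filter_upwards [hK, hlogl.eventually_le_atBot (-2), hux.eventually_le_const
      (show (0 : ℝ) < 1 / 2 by norm_num), hx1] with x hxK hx2 hxu hx01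
    have hpow0 : 0 < x ^ μ := pow_pos hx01.1 μ
    have hpow1 : x ^ μ ≤ 1 := pow_le_one₀ hx01.1.le hx01.2.le
    have hle : x ^ μ * (w x - x ^ 2 * u x) ≤ -2 := by linear_combination hxK + hx2
    nlinarith
  obtain ⟨K', hK'⟩ := exists_le_mul_log_add (c := 1)
    (fun x hx => (h.hasDerivAt_euler_u hx).neg) (by
      filter_upwards [hw, hx1] with x hx hx0
      have := hx0.1.ne'
      field_simp
      linarith)
  obtain ⟨C, hC⟩ := hlog.bound
  obtain ⟨K'', hK''⟩ := exists_le_mul_log_add (c := C + 1) h.hu (by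
    filter_upwards [hK', tendsto_log_nhdsGT_zero.eventually_le_atBot (-(C + 1) - K')]
      with x hx hx'
    simp only [Pi.neg_apply] at hx
    linarith)
  obtain ⟨x, hxC, hxK, hxl⟩ := (hC.and (hK''.and
    (tendsto_log_nhdsGT_zero.eventually_lt_atBot (min 0 (-K''))))).exists
  obtain ⟨hl0, hlK⟩ := lt_min_iff.1 hxl
  rw [norm_eq_abs, norm_eq_abs, abs_of_neg hl0] at hxC
  linarith [neg_abs_le (u x)]

lemma tendsto_correctedFlux : Tendsto (correctedFlux μ u u₁ w w₁) (𝓝[>] 0) (𝓝 0) := by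
  obtain ⟨l, hl⟩ := h.exists_tendsto_correctedFlux hlog
  have hneg : Tendsto (correctedFlux μ (-u) (-u₁) (-w) (-w₁)) (𝓝[>] 0) (𝓝 (-l)) := by
    refine hl.neg.congr fun x => ?_
    simp only [correctedFlux, Pi.neg_apply]
    ring
  have := h.neg.limit_correctedFlux_nonpos hlog.neg_left hneg
  obtain rfl : l = 0 := le_antisymm (h.limit_correctedFlux_nonpos hlog hl) (by linarith)
  exact hl

lemma isBigO_log_pow_mul_w : (fun x => x ^ μ * w x) =O[𝓝[>] 0] log := by
  have hpot : (fun x => x ^ μ * w x - x ^ (μ + 2) * u x) =O[𝓝[>] 0] fun x => -log x := by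
    refine isBigO_of_deriv_isBigO (fun x hx => h.hasDerivAt_correctedPotential hx)
      (fun x hx => (hasDerivAt_log hx.ne').neg) ?_
      (tendsto_neg_atBot_atTop.comp tendsto_log_nhdsGT_zero) ?_
    · filter_upwards [self_mem_nhdsWithin] with x hx
      exact neg_nonpos.2 (inv_nonneg.2 (le_of_lt hx))
    · simpa [div_eq_mul_inv] using ((tendsto_euler_correctedPotential hlog
        (h.tendsto_correctedFlux hlog)).isBigO_one ℝ).mul (Asymptotics.isBigO_refl _ _).neg_right
  have hpow : Tendsto (fun x : ℝ => x ^ (μ + 2)) (𝓝[>] 0) (𝓝 (0 ^ (μ + 2))) :=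
    ((continuous_pow (μ + 2)).tendsto 0).mono_left nhdsWithin_le_nhds
  refine ((Asymptotics.isBigO_neg_right.1 hpot).add
    ((hpow.isBigO_one ℝ).mul hlog |>.congr_right fun x => one_mul _)).congr_left fun x => ?_
  ring

lemma isBigO_inv_pow_euler_u : (fun x => x * u₁ x) =O[𝓝[>] 0] fun x => (x ^ (μ + 1))⁻¹ := by
  have hlim : Tendsto (fun x => x ^ (μ + 3) * u x + x ^ 1 * (x ^ μ * w x)) (𝓝[>] 0) (𝓝 0) := by
    simpa only [add_zero] using (tendsto_pow_mul_of_isBigO_log hlog (μ + 2).succ_ne_zero).add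
      (tendsto_pow_mul_of_isBigO_log (h.isBigO_log_pow_mul_w hlog) one_ne_zero)
  refine isBigO_of_deriv_isBigO (g' := fun x => -((μ + 1 : ℕ) * (x ^ (μ + 2))⁻¹))
    (fun x hx => h.hasDerivAt_euler_u hx) (fun x hx => ?_) ?_ ?_ ?_
  · convert! (hasDerivAt_pow_div (μ + 1) hx.ne').inv (pow_ne_zero _ hx.ne') using 1
    field_simp
    ring
  · filter_upwards [self_mem_nhdsWithin] with x hx
    have : 0 < x := hx
    exact neg_nonpos.2 (by positivity)
  · refine (tendsto_inv_nhdsGT_zero.comp (tendsto_nhdsWithin_iff.2 ⟨?_, ?_⟩))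
    · simpa using ((continuous_pow (μ + 1)).tendsto (0 : ℝ)).mono_left nhdsWithin_le_nhds
    · filter_upwards [self_mem_nhdsWithin] with x hx using pow_pos (mem_Ioi.1 hx) _
  · refine Asymptotics.IsBigO.neg_right (Asymptotics.IsBigO.const_mul_right (by positivity) ?_)
    refine ((hlim.isBigO_one ℝ).mul (Asymptotics.isBigO_refl
      (fun x : ℝ => (x ^ (μ + 2))⁻¹) _)).congr' ?_ (.of_forall fun x => one_mul _)
    filter_upwards [self_mem_nhdsWithin] with x hx
    have : x ≠ 0 := ne_of_gt hx
    field_simp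
    ring

lemma tendsto_pow_mul_u₁ : Tendsto (fun x => x ^ (μ + 3) * u₁ x) (𝓝[>] 0) (𝓝 0) := by
  have hid : Tendsto (fun x : ℝ => x) (𝓝[>] 0) (𝓝 0) := tendsto_id.mono_left nhdsWithin_le_nhds
  refine (((Asymptotics.isBigO_refl (fun x : ℝ => x ^ (μ + 2)) _).mul
    (h.isBigO_inv_pow_euler_u hlog)).congr' ?_ ?_).trans_tendsto hid
  · exact .of_forall fun x => by ring
  · filter_upwards [self_mem_nhdsWithin] with x hx
    have : x ≠ 0 := ne_of_gt hx
    field_simp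
    ring

lemma tendsto_flux : Tendsto (fun x => x ^ μ * (x * w₁ x + μ * w x)) (𝓝[>] 0) (𝓝 0) := by
  have := ((h.tendsto_correctedFlux hlog).add (h.tendsto_pow_mul_u₁ hlog)).sub
    ((tendsto_pow_mul_of_isBigO_log hlog (k := μ + 2) (by simp)).const_mul
      ((μ : ℝ) + 2))
  simp only [mul_zero, add_zero, sub_zero] at this
  refine this.congr fun x => ?_
  unfold correctedFlux
  ring

end IsDopSystem

/-! ### Green's formula -/

/-- Continuous functions of at most polynomial growth at `+∞`: the multipliers for which all
integrals against a decaying solution converge. -/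
@[fun_prop]
structure IsTempered (f : ℝ → ℝ) : Prop where
  continuous : Continuous f
  exists_isBigO : ∃ N : ℕ, f =O[atTop] fun x => x ^ N

namespace IsTempered

variable {f g : ℝ → ℝ}

@[fun_prop]
lemma const (c : ℝ) : IsTempered fun _ => c :=
  ⟨continuous_const, 0, by
    simpa using Asymptotics.isBigO_const_const c (one_ne_zero (α := ℝ)) (atTop : Filter ℝ)⟩

@[fun_prop]
lemma id : IsTempered fun x => x :=
  ⟨continuous_id, 1, by simpa using Asymptotics.isBigO_refl _ _⟩

@[fun_prop]
lemma mul (hf : IsTempered f) (hg : IsTempered g) : IsTempered fun x => f x * g x := by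
  obtain ⟨hfc, N, hN⟩ := hf
  obtain ⟨hgc, M, hM⟩ := hg
  exact ⟨hfc.mul hgc, N + M, by simpa only [pow_add] using hN.mul hM⟩

@[fun_prop]
lemma add (hf : IsTempered f) (hg : IsTempered g) : IsTempered fun x => f x + g x := by
  obtain ⟨hfc, N, hN⟩ := hf
  obtain ⟨hgc, M, hM⟩ := hg
  have hmono {k l : ℕ} (hkl : k ≤ l) : (fun x : ℝ => x ^ k) =O[atTop] fun x => x ^ l := by
    refine .of_bound' ?_
    filter_upwards [eventually_ge_atTop 1] with x hx
    rw [norm_pow, norm_pow]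
    exact pow_le_pow_right₀ (hx.trans (le_abs_self x)) hkl
  exact ⟨hfc.add hgc, max N M, (hN.trans (hmono (le_max_left N M))).add
    (hM.trans (hmono (le_max_right N M)))⟩

@[fun_prop]
lemma sub (hf : IsTempered f) (hg : IsTempered g) : IsTempered fun x => f x - g x := by
  simpa only [neg_one_mul, sub_eq_add_neg] using hf.add ((const (-1)).mul hg)

@[fun_prop]
lemma pow (hf : IsTempered f) (k : ℕ) : IsTempered fun x => f x ^ k := by
  induction k with
  | zero => simpa using const 1
  | succ k ih => simpa only [pow_succ] using ih.mul hf

@[fun_prop]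
lemma normBesselJ (p : ℕ) (a : ℝ) : IsTempered fun x => normBesselJ p (a * x) :=
  ⟨(continuous_normBesselJ p).comp (continuous_const_mul a), 0,
    .of_bound 1 (.of_forall fun x => by simpa using abs_normBesselJ_le_one p (a * x))⟩

lemma tendsto_mul_nhdsGT_zero (hf : IsTempered f) (hg : Tendsto g (𝓝[>] 0) (𝓝 0)) :
    Tendsto (fun x => g x * f x) (𝓝[>] 0) (𝓝 0) := by
  simpa using hg.mul (hf.continuous.continuousWithinAt (s := Ioi 0) (x := 0))

lemma tendsto_mul_atTop (hf : IsTempered f)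
    (hg : ∀ k : ℕ, (fun x => x ^ k * g x) =O[atTop] fun x => exp (-x / 4)) :
    Tendsto (fun x => g x * f x) atTop (𝓝 0) := by
  obtain ⟨N, hN⟩ := hf.exists_isBigO
  have hexp : Tendsto (fun x : ℝ => exp (-x / 4)) atTop (𝓝 0) :=
    tendsto_exp_atBot.comp (tendsto_neg_atTop_atBot.atBot_div_const (by norm_num))
  refine (((Asymptotics.isBigO_refl g atTop).mul hN).trans ?_).trans_tendsto hexp
  simpa only [mul_comm] using hg N

lemma integrableOn_mul_exp_neg (hf : IsTempered f) :
    IntegrableOn (fun x => f x * exp (-x / 4)) (Ioi 0) := by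
  obtain ⟨N, hN⟩ := hf.exists_isBigO
  have hpow : (fun x : ℝ => x ^ N) =O[atTop] fun x => exp (1 / 8 * x) :=
    (isLittleO_pow_exp_pos_mul_atTop N (by norm_num)).isBigO
  refine integrable_of_isBigO_exp_neg (b := 1 / 8) (by norm_num)
    (hf.continuous.mul (by fun_prop)).continuousOn ?_
  refine ((hN.trans hpow).mul (Asymptotics.isBigO_refl (fun x => exp (-x / 4)) _)).congr_right
    fun x => ?_
  rw [← exp_add]
  ring_nf

end IsTempered

/-- Solutions of the system that are square integrable at `+∞` and at most logarithmic at `0`. -/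
structure IsDecayingSolution (μ : ℕ) (lam : ℝ) (u u₁ w w₁ : ℝ → ℝ) : Prop extends
    IsDopSystem μ lam u u₁ w w₁ where
  isBigO_log : u =O[𝓝[>] 0] log
  integrableOn_sq : IntegrableOn (fun x => u x ^ 2) (Ioi 1)

namespace IsDecayingSolution

variable {μ : ℕ} {lam : ℝ} {u u₁ w w₁ : ℝ → ℝ} (h : IsDecayingSolution μ lam u u₁ w w₁)
include h

lemma continuousOn : ContinuousOn u (Ioi 0) :=
  fun x hx => (h.hu x hx).continuousAt.continuousWithinAt

lemma exists_abs_mul_le : ∃ C, 0 ≤ C ∧ ∀ x > 0, |x * u x| ≤ C * exp (-x / 4) := by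
  have hzero : Tendsto (fun x => x ^ 1 * u x) (𝓝[>] 0) (𝓝 0) :=
    tendsto_pow_mul_of_isBigO_log h.isBigO_log one_ne_zero
  obtain ⟨K, hK⟩ := (h.isBigO_exp_neg h.integrableOn_sq 1).1.bound
  obtain ⟨R, hR⟩ := eventually_atTop.1 hK
  obtain ⟨e, he, hsub⟩ := mem_nhdsGT_iff_exists_Ioo_subset.1
    (hzero.abs.eventually_le_const (by norm_num : |(0 : ℝ)| < 1))
  have hcont : ContinuousOn (fun x => x ^ 1 * u x) (Icc e R) :=
    (continuous_pow 1).continuousOn.mul (h.continuousOn.mono fun x hx => lt_of_lt_of_le he hx.1)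
  obtain ⟨M, hM⟩ := isCompact_Icc.exists_bound_of_continuousOn hcont
  simp only [pow_one, norm_eq_abs, abs_exp] at hM hR hsub
  have hcompact : ∀ x > 0, x < R → |x * u x| ≤ max 1 M := fun x hx0 hx => by
    rcases lt_or_ge x e with hxe | hxe
    · exact (hsub ⟨hx0, hxe⟩ : |x * u x| ≤ 1).trans (le_max_left _ _)
    · exact (hM x ⟨hxe, hx.le⟩).trans (le_max_right _ _)
  refine ⟨max (max 1 M * exp (R / 4)) K, by positivity, fun x hx0 => ?_⟩
  rcases lt_or_ge x R with hx | hx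
  · calc |x * u x| ≤ max 1 M * 1 := by simpa using hcompact x hx0 hx
      _ ≤ max 1 M * (exp (R / 4) * exp (-x / 4)) := by
        rw [← exp_add]
        gcongr
        exact one_le_exp (by linarith)
      _ ≤ _ := by
        rw [← mul_assoc]
        gcongr
        exact le_max_left _ _
  · exact (hR x hx).trans (by gcongr; exact le_max_right _ _)

lemma integrableOn_mul (m : ℕ) {f : ℝ → ℝ} (hf : IsTempered f) :
    IntegrableOn (fun x => u x * x ^ (m + 1) * f x) (Ioi 0) := by
  obtain ⟨C, -, hC⟩ := h.exists_abs_mul_le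
  refine Integrable.mono' ((((IsTempered.id.pow m).mul hf).integrableOn_mul_exp_neg).norm.const_mul
    C) ?_ ?_
  · exact ((h.continuousOn.mul (continuous_pow (m + 1)).continuousOn).mul
      hf.continuous.continuousOn).aestronglyMeasurable measurableSet_Ioi
  · filter_upwards [ae_restrict_mem measurableSet_Ioi] with x hx
    calc ‖u x * x ^ (m + 1) * f x‖ = |x * u x| * |x ^ m * f x| := by
          rw [norm_eq_abs, ← abs_mul]
          ring_nf
      _ ≤ C * exp (-x / 4) * |x ^ m * f x| := by
          gcongr
          exact hC x hx
      _ = C * ‖x ^ m * f x * exp (-x / 4)‖ := by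
          rw [norm_eq_abs, abs_mul _ (exp _), abs_exp]
          ring

end IsDecayingSolution

/-- Test functions for `D_{μ,0}` together with their successive derivatives, scaled so as to stay
bounded at `0`: `θψ = x² g`, `θ²ψ - x²ψ = x² χ`, `σ = (θ + μ + 2)χ` and `τ = (θ + μ + 2)σ`, so that
`D_{μ,0} ψ = τ - x² χ`. -/
structure IsTestSystem (μ : ℕ) (ψ g χ σ τ : ℝ → ℝ) : Prop where
  hψ : ∀ x > 0, HasDerivAt ψ (x * g x) x
  hg : ∀ x > 0, HasDerivAt (fun x => x ^ 2 * g x) (x * (χ x + ψ x)) x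
  hχ : ∀ x > 0, HasDerivAt χ ((σ x - (μ + 2) * χ x) / x) x
  hσ : ∀ x > 0, HasDerivAt σ ((τ x - (μ + 2) * σ x) / x) x
  tempered_ψ : IsTempered ψ
  tempered_g : IsTempered g
  tempered_χ : IsTempered χ
  tempered_σ : IsTempered σ
  tempered_τ : IsTempered τ

/-- The boundary form in Green's formula for `D_{μ,0}`. -/
def boundaryForm (μ : ℕ) (u u₁ w w₁ ψ g χ σ : ℝ → ℝ) (x : ℝ) : ℝ :=
  x ^ μ * (x * w₁ x + μ * w x) * ψ x - x ^ (μ + 2) * w x * g x + x ^ (μ + 3) * u₁ x * χ x -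
    x ^ (μ + 2) * u x * σ x

lemma IsDopSystem.hasDerivAt_boundaryForm {μ : ℕ} {lam : ℝ} {u u₁ w w₁ ψ g χ σ τ : ℝ → ℝ}
    (h : IsDopSystem μ lam u u₁ w w₁) (hψ : IsTestSystem μ ψ g χ σ τ) {x : ℝ} (hx : 0 < x) :
    HasDerivAt (boundaryForm μ u u₁ w w₁ ψ g χ σ)
      (-(u x * x ^ (μ + 1) * (τ x - x ^ 2 * χ x - lam * ψ x))) x := by
  have hpow (k : ℕ) := hasDerivAt_pow_div k hx.ne'
  have hw := ((hpow μ).mul (h.hw x hx)).mul (hψ.hg x hx)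
  have hu₁ := ((hpow (μ + 2)).mul (h.hasDerivAt_euler_u hx)).mul (hψ.hχ x hx)
  have hu := ((hpow (μ + 2)).mul (h.hu x hx)).mul (hψ.hσ x hx)
  convert! ((((h.hasDerivAt_flux hx).mul (hψ.hψ x hx)).sub hw).add hu₁).sub hu using 1
  · ext y
    simp only [boundaryForm, Pi.mul_apply, Pi.add_apply, Pi.sub_apply]
    ring
  · simp only [Pi.mul_apply]
    push_cast
    field_simp
    ring

namespace IsDecayingSolution

variable {μ : ℕ} {lam : ℝ} {u u₁ w w₁ ψ g χ σ τ : ℝ → ℝ}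
  (h : IsDecayingSolution μ lam u u₁ w w₁) (hψ : IsTestSystem μ ψ g χ σ τ)
include h hψ

lemma tendsto_boundaryForm_nhdsGT_zero :
    Tendsto (boundaryForm μ u u₁ w w₁ ψ g χ σ) (𝓝[>] 0) (𝓝 0) := by
  have hw : Tendsto (fun x => x ^ (μ + 2) * w x) (𝓝[>] 0) (𝓝 0) :=
    (tendsto_pow_mul_of_isBigO_log (h.isBigO_log_pow_mul_w h.isBigO_log) two_ne_zero).congr
      fun x => by ring
  have hu := tendsto_pow_mul_of_isBigO_log h.isBigO_log (μ + 1).succ_ne_zero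
  unfold boundaryForm
  simpa only [add_zero, sub_zero] using
    (((hψ.tempered_ψ.tendsto_mul_nhdsGT_zero (h.tendsto_flux h.isBigO_log)).sub
      (hψ.tempered_g.tendsto_mul_nhdsGT_zero hw)).add
        (hψ.tempered_χ.tendsto_mul_nhdsGT_zero (h.tendsto_pow_mul_u₁ h.isBigO_log))).sub
          (hψ.tempered_σ.tendsto_mul_nhdsGT_zero hu)

lemma tendsto_boundaryForm_atTop : Tendsto (boundaryForm μ u u₁ w w₁ ψ g χ σ) atTop (𝓝 0) := by
  have hdecay := h.isBigO_exp_neg h.integrableOn_sq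
  have hpow {f : ℝ → ℝ} (m : ℕ) (hf : ∀ k : ℕ, (fun x => x ^ k * f x) =O[atTop]
      fun x => exp (-x / 4)) (k : ℕ) :
      (fun x => x ^ k * (x ^ m * f x)) =O[atTop] fun x => exp (-x / 4) :=
    (hf (k + m)).congr_left fun x => by ring
  have hflux (k : ℕ) : (fun x => x ^ k * (x ^ μ * (x * w₁ x + μ * w x))) =O[atTop]
      fun x => exp (-x / 4) :=
    ((hdecay (k + μ + 1)).2.2.2.add ((hdecay (k + μ)).2.2.1.const_mul_left (μ : ℝ))).congr_left
      fun x => by ring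
  unfold boundaryForm
  simpa only [add_zero, sub_zero] using
    (((hψ.tempered_ψ.tendsto_mul_atTop hflux).sub
      (hψ.tempered_g.tendsto_mul_atTop (hpow (μ + 2) fun k => (hdecay k).2.2.1))).add
        (hψ.tempered_χ.tendsto_mul_atTop (hpow (μ + 3) fun k => (hdecay k).2.1))).sub
          (hψ.tempered_σ.tendsto_mul_atTop (hpow (μ + 2) fun k => (hdecay k).1))

/-- Green's formula without boundary terms: `u` is orthogonal to `(D_{μ,0} - lam) ψ`. -/
theorem integral_mul_testSystem_eq_zero :
    ∫ x in Ioi 0, u x * x ^ (μ + 1) * (τ x - x ^ 2 * χ x - lam * ψ x) = 0 := by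
  have h_int := h.integrableOn_mul μ ((hψ.tempered_τ.sub ((IsTempered.id.pow 2).mul
    hψ.tempered_χ)).sub ((IsTempered.const lam).mul hψ.tempered_ψ))
  have hgreen := integral_Ioi_deriv_mul_eq_sub (v := fun _ => 1) (v' := fun _ => 0)
    (fun x hx => h.hasDerivAt_boundaryForm hψ hx) (fun x _ => hasDerivAt_const x 1)
    (integrable_congr (.of_forall fun x => by simp) |>.2 h_int.neg)
    (by simpa [Pi.mul_def] using h.tendsto_boundaryForm_nhdsGT_zero hψ)
    (by simpa [Pi.mul_def] using h.tendsto_boundaryForm_atTop hψ)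
  simpa [integral_neg] using hgreen

end IsDecayingSolution

/-! ### Uniqueness for the Gegenbauer equation -/

lemma neg_cos_mul_sin_le_sin {s t : ℝ} (hs : 0 ≤ s) (hst : s ≤ t) (ht : t ≤ π) :
    -cos s * sin t ≤ sin s := by
  have hsin : 0 ≤ sin (t - s) := sin_nonneg_of_nonneg_of_le_pi (by linarith) (by linarith)
  have hcos : -cos t * sin s ≤ 1 * sin s := by
    gcongr
    · exact sin_nonneg_of_nonneg_of_le_pi hs (hst.trans ht)
    · linarith [neg_one_le_cos t]
  rw [sin_sub] at hsin
  linarith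

lemma nonpos_of_hasDerivAt_le_mul {E E' : ℝ → ℝ} {M T : ℝ} (hT : 0 ≤ T) (h0 : E 0 ≤ 0)
    (hE : ∀ t ∈ Icc 0 T, HasDerivAt E (E' t) t) (hE' : ∀ t ∈ Ico 0 T, E' t ≤ M * E t) :
    E T ≤ 0 := by
  have hgronwall := le_gronwallBound_of_liminf_deriv_right_le (f := E) (f' := E') (ε := 0)
    (fun t ht => (hE t ht).continuousAt.continuousWithinAt)
    (fun t ht r hr => ((hE t (Ico_subset_Icc_self ht)).hasDerivWithinAt.liminf_right_slope_le hr))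
    h0 (by simpa only [add_zero] using hE') T ⟨hT, le_rfl⟩
  rwa [gronwallBound_ε0_δ0] at hgronwall

section GegenbauerUniqueness

variable {T : ℝ} {f f₁ f₂ : ℝ → ℝ}

/- The singular term has a sign up to a bounded error: `-cot` is bounded above on `(0, T]`, so the
energy `f₁² + f²` satisfies a Grönwall inequality. -/
lemma gegenbauer_energy_deriv_le {k κ t x y z : ℝ} (hk : 0 ≤ k) (ht : 0 < t) (htT : t ≤ T)
    (hT : T < π) (hode : sin t * z + k * cos t * y + κ * sin t * x = 0) :
    2 * y * z + 2 * x * y ≤ (2 * k / sin T + |1 - κ|) * (y ^ 2 + x ^ 2) := by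
  have hsin : 0 < sin t := sin_pos_of_pos_of_lt_pi ht (htT.trans_lt hT)
  have hsinT : 0 < sin T := sin_pos_of_pos_of_lt_pi (ht.trans_le htT) hT
  have hcot : -cos t / sin t ≤ 1 / sin T := by
    rw [div_le_div_iff₀ hsin hsinT, one_mul]
    exact neg_cos_mul_sin_le_sin ht.le htT hT.le
  have hz : z = k * (-cos t / sin t) * y - κ * x := by
    field_simp
    linear_combination hode
  have hxy : (1 - κ) * (2 * x * y) ≤ |1 - κ| * (y ^ 2 + x ^ 2) := by
    refine (le_abs_self _).trans ?_
    rw [abs_mul]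
    gcongr
    exact abs_le.2 ⟨by linarith [sq_nonneg (x + y)], by linarith [two_mul_le_add_sq x y]⟩
  calc 2 * y * z + 2 * x * y = 2 * k * y ^ 2 * (-cos t / sin t) + (1 - κ) * (2 * x * y) := by
        rw [hz]
        ring
    _ ≤ 2 * k * (y ^ 2 + x ^ 2) * (1 / sin T) + |1 - κ| * (y ^ 2 + x ^ 2) := by
        refine add_le_add ?_ hxy
        calc 2 * k * y ^ 2 * (-cos t / sin t) ≤ 2 * k * y ^ 2 * (1 / sin T) := by gcongr
          _ ≤ 2 * k * (y ^ 2 + x ^ 2) * (1 / sin T) := by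
            gcongr
            linarith [sq_nonneg x]
    _ = _ := by ring

lemma eq_zero_of_trigonometric_gegenbauer_ode {k κ : ℝ} (hk : 0 < k) (hT : T ≤ π)
    (hf : ∀ t ∈ Ico 0 T, HasDerivAt f (f₁ t) t) (hf₁ : ∀ t ∈ Ico 0 T, HasDerivAt f₁ (f₂ t) t)
    (hode : ∀ t ∈ Ico 0 T, sin t * f₂ t + k * cos t * f₁ t + κ * sin t * f t = 0)
    (h0 : f 0 = 0) {t : ℝ} (ht : t ∈ Ico 0 T) : f t = 0 := by
  have hf₁0 : f₁ 0 = 0 := by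
    simpa [hk.ne'] using hode 0 ⟨le_rfl, ht.1.trans_lt ht.2⟩
  have hsub : Icc 0 t ⊆ Ico 0 T := Icc_subset_Ico_right ht.2
  have henergy : f₁ t ^ 2 + f t ^ 2 ≤ 0 := by
    refine nonpos_of_hasDerivAt_le_mul (E := fun s => f₁ s ^ 2 + f s ^ 2)
      (E' := fun s => 2 * f₁ s * f₂ s + 2 * f s * f₁ s) (M := 2 * k / sin t + |1 - κ|) ht.1
      (by simp [hf₁0, h0]) (fun s hs => ?_) fun s hs => ?_
    · convert! ((hf₁ s (hsub hs)).pow 2).add ((hf s (hsub hs)).pow 2) using 1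
      push_cast
      ring
    · rcases hs.1.eq_or_lt with rfl | hs0
      · simp [hf₁0, h0]
      · exact gegenbauer_energy_deriv_le hk.le hs0 hs.2.le (ht.2.trans_le hT)
          (hode s (hsub (Ico_subset_Icc_self hs)))
  exact pow_eq_zero_iff two_ne_zero |>.1
    (le_antisymm (by linarith [sq_nonneg (f₁ t)]) (sq_nonneg (f t)))

theorem mul_gegenbauerCt_one_eq_of_ode {l : ℝ} (m : ℕ) (hl : 0 < l) (hT : T ≤ π)
    (hf : ∀ t ∈ Ico 0 T, HasDerivAt f (f₁ t) t) (hf₁ : ∀ t ∈ Ico 0 T, HasDerivAt f₁ (f₂ t) t)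
    (hode : ∀ t ∈ Ico 0 T,
      sin t * f₂ t + 2 * l * cos t * f₁ t + m * (m + 2 * l) * sin t * f t = 0)
    {t : ℝ} (ht : t ∈ Ico 0 T) :
    f t * gegenbauerCt m l 1 = f 0 * gegenbauerCt m l (cos t) := by
  let C := gegenbauerCt m l
  have hC (t : ℝ) : HasDerivAt (fun t => C (cos t)) (deriv C (cos t) * -sin t) t :=
    (hasDerivAt_deriv_gegenbauerCt m l (cos t)).comp t (hasDerivAt_cos t)
  have hC₁ (t : ℝ) : HasDerivAt (fun t => deriv C (cos t) * -sin t)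
      (deriv (deriv C) (cos t) * -sin t * -sin t + deriv C (cos t) * -cos t) t :=
    ((hasDerivAt_deriv_deriv_gegenbauerCt m l (cos t)).comp t (hasDerivAt_cos t)).mul
      (hasDerivAt_sin t).neg
  refine sub_eq_zero.1 (eq_zero_of_trigonometric_gegenbauer_ode
    (f := fun t => f t * C 1 - f 0 * C (cos t)) (k := 2 * l) (κ := m * (m + 2 * l))
    (by positivity) hT (fun t ht => ((hf t ht).mul_const _).sub ((hC t).const_mul _))
    (fun t ht => ((hf₁ t ht).mul_const _).sub ((hC₁ t).const_mul _)) (fun t ht => ?_)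
    (by simp) ht)
  linear_combination C 1 * hode t ht - f 0 * sin t * gegenbauerCt_ode m (cos t) hl
    - f 0 * sin t * deriv (deriv C) (cos t) * sin_sq_add_cos_sq t

end GegenbauerUniqueness

/-- The integrals `∫₀^∞ u(x) x^m J̃_p(ax) J̃_q(bx) dx`. -/
def besselIntegral (u : ℝ → ℝ) (p q m : ℕ) (a b : ℝ) : ℝ :=
  ∫ x in Ioi 0, u x * x ^ m * (normBesselJ p (a * x) * normBesselJ q (b * x))

lemma besselIntegral_comm (u : ℝ → ℝ) (p q m : ℕ) (a b : ℝ) :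
    besselIntegral u p q m a b = besselIntegral u q p m b a :=
  integral_congr_ae (.of_forall fun x => by ring)

namespace IsDecayingSolution

variable {μ : ℕ} {lam : ℝ} {u u₁ w w₁ : ℝ → ℝ} (h : IsDecayingSolution μ lam u u₁ w w₁)
include h

lemma integrableOn_normBesselJ_mul (p q m : ℕ) (a b : ℝ) :
    IntegrableOn (fun x => u x * x ^ (m + 1) * (normBesselJ p (a * x) * normBesselJ q (b * x)))
      (Ioi 0) :=
  h.integrableOn_mul m ((IsTempered.normBesselJ p a).mul (.normBesselJ q b))

lemma sum_mul_besselIntegral {ι : Type*} [Fintype ι] (c : ι → ℝ) (p q m : ι → ℕ) (a b : ℝ) :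
    ∑ i, c i * besselIntegral u (p i) (q i) (m i + 1) a b = ∫ x in Ioi 0,
      ∑ i, c i * (u x * x ^ (m i + 1) *
        (normBesselJ (p i) (a * x) * normBesselJ (q i) (b * x))) := by
  rw [integral_finsetSum _ fun i _ =>
    (h.integrableOn_normBesselJ_mul (p i) (q i) (m i) a b).const_mul (c i)]
  simp only [integral_const_mul, besselIntegral]

lemma besselIntegral_recurrence_left (p q m : ℕ) (a b : ℝ) :
    besselIntegral u p q (m + 1) a b - (p + 1) * besselIntegral u (p + 1) q (m + 1) a b
      + a ^ 2 / 4 * besselIntegral u (p + 2) q (m + 3) a b = 0 := by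
  have hsum := h.sum_mul_besselIntegral ![1, -(p + 1 : ℝ), a ^ 2 / 4] ![p, p + 1, p + 2]
    ![q, q, q] ![m, m, m + 2] a b
  rw [integral_eq_zero_of_ae (.of_forall fun x => ?_)] at hsum
  · simp only [Fin.sum_univ_three, Matrix.cons_val] at hsum
    linear_combination hsum
  · simp only [Fin.sum_univ_three, Matrix.cons_val, Pi.zero_apply]
    linear_combination u x * x ^ (m + 1) * normBesselJ q (b * x) * normBesselJ_recurrence p (a * x)

lemma besselIntegral_recurrence_right (p q m : ℕ) (a b : ℝ) :
    besselIntegral u p q (m + 1) a b - (q + 1) * besselIntegral u p (q + 1) (m + 1) a b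
      + b ^ 2 / 4 * besselIntegral u p (q + 2) (m + 3) a b = 0 := by
  simpa only [besselIntegral_comm u _ _ _ b a] using h.besselIntegral_recurrence_left q p m b a

end IsDecayingSolution

/-! ### Relations between the Bessel integrals -/

section Derivative

variable {μ : ℕ} {lam : ℝ} {u u₁ w w₁ : ℝ → ℝ}

lemma hasFDerivAt_normBesselJ_mul (p q : ℕ) (x : ℝ) (z : ℝ × ℝ) :
    HasFDerivAt (fun z : ℝ × ℝ => normBesselJ p (z.1 * x) * normBesselJ q (z.2 * x))
      ((-(z.1 / 2) * x ^ 2 * (normBesselJ (p + 1) (z.1 * x) * normBesselJ q (z.2 * x))) •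
          ContinuousLinearMap.fst ℝ ℝ ℝ +
        (-(z.2 / 2) * x ^ 2 * (normBesselJ p (z.1 * x) * normBesselJ (q + 1) (z.2 * x))) •
          ContinuousLinearMap.snd ℝ ℝ ℝ) z := by
  have h₁ := (hasDerivAt_normBesselJ p (z.1 * x)).comp_hasFDerivAt z
    ((hasFDerivAt_fst (𝕜 := ℝ) (p := z)).mul_const x)
  have h₂ := (hasDerivAt_normBesselJ q (z.2 * x)).comp_hasFDerivAt z
    ((hasFDerivAt_snd (𝕜 := ℝ) (p := z)).mul_const x)
  convert! h₁.mul h₂ using 1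
  ext <;> simp <;> ring

lemma norm_smul_fst_add_smul_snd_le (c d : ℝ) :
    ‖c • ContinuousLinearMap.fst ℝ ℝ ℝ + d • ContinuousLinearMap.snd ℝ ℝ ℝ‖ ≤ |c| + |d| := by
  refine (norm_add_le _ _).trans (add_le_add ?_ ?_) <;> rw [norm_smul, norm_eq_abs]
  · exact mul_le_of_le_one_right (abs_nonneg c) (ContinuousLinearMap.norm_fst_le ℝ ℝ ℝ)
  · exact mul_le_of_le_one_right (abs_nonneg d) (ContinuousLinearMap.norm_snd_le ℝ ℝ ℝ)

lemma IsDecayingSolution.hasFDerivAt_besselIntegral (h : IsDecayingSolution μ lam u u₁ w w₁)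
    (p q m : ℕ) (z : ℝ × ℝ) :
    HasFDerivAt (fun z : ℝ × ℝ => besselIntegral u p q (m + 1) z.1 z.2)
      ((-(z.1 / 2) * besselIntegral u (p + 1) q (m + 3) z.1 z.2) • ContinuousLinearMap.fst ℝ ℝ ℝ +
        (-(z.2 / 2) * besselIntegral u p (q + 1) (m + 3) z.1 z.2) •
          ContinuousLinearMap.snd ℝ ℝ ℝ) z := by
  let U (x : ℝ) := u x * x ^ (m + 3)
  let J (p q : ℕ) (z : ℝ × ℝ) (x : ℝ) := normBesselJ p (z.1 * x) * normBesselJ q (z.2 * x)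
  have hJ (p q : ℕ) (z : ℝ × ℝ) (x : ℝ) : |J p q z x| ≤ 1 := by
    rw [abs_mul]
    exact mul_le_one₀ (abs_normBesselJ_le_one p _) (abs_nonneg _) (abs_normBesselJ_le_one q _)
  have h_int (p q : ℕ) : IntegrableOn (fun x => U x * J p q z x) (Ioi 0) :=
    h.integrableOn_normBesselJ_mul p q (m + 2) z.1 z.2
  have h₁ := ((h_int (p + 1) q).const_mul (-(z.1 / 2))).smul_const (ContinuousLinearMap.fst ℝ ℝ ℝ)
  have h₂ := ((h_int p (q + 1)).const_mul (-(z.2 / 2))).smul_const (ContinuousLinearMap.snd ℝ ℝ ℝ)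
  have hderiv := hasFDerivAt_integral_of_dominated_of_fderiv_le (μ := volume.restrict (Ioi 0))
    (F := fun z x => u x * x ^ (m + 1) * J p q z x)
    (F' := fun z x => (-(z.1 / 2) * (U x * J (p + 1) q z x)) • ContinuousLinearMap.fst ℝ ℝ ℝ +
      (-(z.2 / 2) * (U x * J p (q + 1) z x)) • ContinuousLinearMap.snd ℝ ℝ ℝ)
    (bound := fun x => (‖z‖ + 1) * |U x * 1|) (ball_mem_nhds z one_pos)
    (.of_forall fun z => (h.integrableOn_normBesselJ_mul p q m z.1 z.2).aestronglyMeasurable)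
    (h.integrableOn_normBesselJ_mul p q m z.1 z.2) (h₁.add h₂).aestronglyMeasurable
    (.of_forall fun x y hy => ?_) ((h.integrableOn_mul (m + 2) (.const 1)).abs.const_mul _)
    (.of_forall fun x y _ => ?_)
  · rw [integral_add h₁ h₂, integral_smul_const, integral_smul_const, integral_const_mul,
      integral_const_mul] at hderiv
    exact hderiv
  · have hbound (c : ℝ) (hc : |c| ≤ ‖y‖) (p q : ℕ) :
        |-(c / 2) * (U x * J p q y x)| ≤ (‖z‖ + 1) / 2 * |U x * 1| := by
      have hyz : ‖y‖ ≤ ‖z‖ + 1 := by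
        linarith [norm_le_norm_add_norm_sub' y z, mem_ball_iff_norm.1 hy]
      rw [mul_one, abs_mul, abs_neg, abs_mul, abs_div, abs_two]
      gcongr
      · exact hc.trans hyz
      · exact mul_le_of_le_one_right (abs_nonneg _) (hJ p q y x)
    refine (norm_smul_fst_add_smul_snd_le _ _).trans ?_
    linarith [hbound y.1 (norm_fst_le y) (p + 1) q, hbound y.2 (norm_snd_le y) p (q + 1)]
  · convert! (hasFDerivAt_normBesselJ_mul p q x y).const_mul (u x * x ^ (m + 1)) using 1
    rw [smul_add, smul_smul, smul_smul]
    congr 2 <;> ring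

lemma IsDecayingSolution.hasDerivAt_besselIntegral (h : IsDecayingSolution μ lam u u₁ w w₁)
    (p q m : ℕ) {a b : ℝ → ℝ} {a' b' t : ℝ} (ha : HasDerivAt a a' t) (hb : HasDerivAt b b' t) :
    HasDerivAt (fun t => besselIntegral u p q (m + 1) (a t) (b t))
      (-(a t * a' / 2) * besselIntegral u (p + 1) q (m + 3) (a t) (b t)
        - (b t * b' / 2) * besselIntegral u p (q + 1) (m + 3) (a t) (b t)) t := by
  convert! (h.hasFDerivAt_besselIntegral p q m (a t, b t)).comp_hasDerivAt t (ha.prodMk hb) using 1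
  simp
  ring

end Derivative

section TestSystem

variable {a b : ℝ} {P₀ P₁ Q₀ Q₁ : ℝ → ℝ}

lemma hasDerivAt_normBesselJ_mul (p : ℕ) (a x : ℝ) :
    HasDerivAt (fun x => normBesselJ p (a * x))
      (-(a ^ 2 * x / 2) * normBesselJ (p + 1) (a * x)) x := by
  convert! (hasDerivAt_normBesselJ p (a * x)).comp x ((hasDerivAt_id x).const_mul a) using 1
  ring

lemma hasDerivAt_normBesselJ_succ_mul (p : ℕ) (a : ℝ) {x : ℝ} (hx : 0 < x) :
    HasDerivAt (fun x => normBesselJ (p + 1) (a * x))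
      ((2 * normBesselJ p (a * x) - 2 * (p + 1) * normBesselJ (p + 1) (a * x)) / x) x := by
  convert! hasDerivAt_normBesselJ_mul (p + 1) a x using 1
  field_simp
  linear_combination 4 * normBesselJ_recurrence p (a * x)

/-- The pair `P₀ = J̃_p(a ·)`, `P₁ = J̃_{p+1}(a ·)`, described by its differential equations. -/
structure IsBesselPair (p : ℕ) (a : ℝ) (P₀ P₁ : ℝ → ℝ) : Prop where
  tempered₀ : IsTempered P₀
  tempered₁ : IsTempered P₁
  hasDerivAt₀ : ∀ x > 0, HasDerivAt P₀ (-(a ^ 2 * x / 2) * P₁ x) x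
  hasDerivAt₁ : ∀ x > 0, HasDerivAt P₁ ((2 * P₀ x - 2 * (p + 1) * P₁ x) / x) x

lemma isBesselPair_normBesselJ (p : ℕ) (a : ℝ) :
    IsBesselPair p a (fun x => normBesselJ p (a * x)) (fun x => normBesselJ (p + 1) (a * x)) where
  tempered₀ := .normBesselJ p a
  tempered₁ := .normBesselJ (p + 1) a
  hasDerivAt₀ x _ := hasDerivAt_normBesselJ_mul p a x
  hasDerivAt₁ _ hx := hasDerivAt_normBesselJ_succ_mul p a hx

namespace IsBesselPair

variable {p q : ℕ} (hP : IsBesselPair p a P₀ P₁) (hQ : IsBesselPair q b Q₀ Q₁) {x : ℝ}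
include hP hQ

lemma hasDerivAt_mul₀₀ (hx : 0 < x) : HasDerivAt (fun x => P₀ x * Q₀ x)
    (x * (-(1 / 2) * (a ^ 2 * (P₁ x * Q₀ x) + b ^ 2 * (P₀ x * Q₁ x)))) x := by
  convert! (hP.hasDerivAt₀ x hx).mul (hQ.hasDerivAt₀ x hx) using 1
  ring

lemma hasDerivAt_mul₁₀ (hx : 0 < x) : HasDerivAt (fun x => P₁ x * Q₀ x)
    ((2 * (P₀ x * Q₀ x) - 2 * (p + 1) * (P₁ x * Q₀ x) - b ^ 2 / 2 * x ^ 2 * (P₁ x * Q₁ x)) / x)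
    x := by
  convert! (hP.hasDerivAt₁ x hx).mul (hQ.hasDerivAt₀ x hx) using 1
  field_simp
  ring

lemma hasDerivAt_mul₀₁ (hx : 0 < x) : HasDerivAt (fun x => P₀ x * Q₁ x)
    ((2 * (P₀ x * Q₀ x) - 2 * (q + 1) * (P₀ x * Q₁ x) - a ^ 2 / 2 * x ^ 2 * (P₁ x * Q₁ x)) / x)
    x := by
  convert! (hP.hasDerivAt₀ x hx).mul (hQ.hasDerivAt₁ x hx) using 1
  field_simp
  ring

lemma hasDerivAt_sq_mul₁₁ (hx : 0 < x) : HasDerivAt (fun x => x ^ 2 * (P₁ x * Q₁ x))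
    ((2 * (P₀ x * Q₁ x) + 2 * (P₁ x * Q₀ x) - 2 * (p + q + 1) * (P₁ x * Q₁ x)) * x) x := by
  convert! (hasDerivAt_pow_div 2 hx.ne').mul ((hP.hasDerivAt₁ x hx).mul (hQ.hasDerivAt₁ x hx))
    using 1
  simp only [Pi.mul_apply]
  push_cast
  field_simp
  ring

end IsBesselPair

end TestSystem

section Relation

variable {a b : ℝ} {P₀ P₁ Q₀ Q₁ : ℝ → ℝ} {n : ℕ}

lemma IsBesselPair.isTestSystem (hP : IsBesselPair n a P₀ P₁) (hQ : IsBesselPair 0 b Q₀ Q₁)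
    {T K α β : ℝ} (hT : T = 1 + a ^ 2 + b ^ 2) (hK : K = 2 * n * a ^ 2 - (2 * n + 2) * T)
    (hα : α = T * a ^ 2 / 2 + a ^ 2 * b ^ 2) (hβ : β = T * b ^ 2 / 2 + a ^ 2 * b ^ 2) :
    IsTestSystem (2 * n) (fun x => P₀ x * Q₀ x)
      (fun x => -(1 / 2) * (a ^ 2 * (P₁ x * Q₀ x) + b ^ 2 * (P₀ x * Q₁ x)))
      (fun x => n * a ^ 2 * (P₁ x * Q₀ x) - T * (P₀ x * Q₀ x)
        + a ^ 2 * b ^ 2 / 2 * (x ^ 2 * (P₁ x * Q₁ x)))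
      (fun x => K * (P₀ x * Q₀ x) - n * a ^ 2 * b ^ 2 / 2 * (x ^ 2 * (P₁ x * Q₁ x))
        + x ^ 2 * (α * (P₁ x * Q₀ x) + β * (P₀ x * Q₁ x)))
      (fun x => K * ((2 * n + 2) * (P₀ x * Q₀ x)
          - 1 / 2 * x ^ 2 * (a ^ 2 * (P₁ x * Q₀ x) + b ^ 2 * (P₀ x * Q₁ x)))
        - n * a ^ 2 * b ^ 2 * x ^ 2 * (P₀ x * Q₁ x + P₁ x * Q₀ x)
        + α * x ^ 2 * (2 * (P₁ x * Q₀ x) + 2 * (P₀ x * Q₀ x)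
          - b ^ 2 / 2 * x ^ 2 * (P₁ x * Q₁ x))
        + β * x ^ 2 * ((2 * n + 2) * (P₀ x * Q₁ x) + 2 * (P₀ x * Q₀ x)
          - a ^ 2 / 2 * x ^ 2 * (P₁ x * Q₁ x))) := by
  have hP₀ := hP.tempered₀
  have hP₁ := hP.tempered₁
  have hQ₀ := hQ.tempered₀
  have hQ₁ := hQ.tempered₁
  exact {
      hψ _ hx := hP.hasDerivAt_mul₀₀ hQ hx
      hg x hx := by
        convert! (hasDerivAt_pow_div 2 hx.ne').mul
          ((((hP.hasDerivAt_mul₁₀ hQ hx).const_mul (a ^ 2)).add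
            ((hP.hasDerivAt_mul₀₁ hQ hx).const_mul (b ^ 2))).const_mul (-(1 / 2))) using 1
        simp only [Pi.add_apply]
        push_cast
        field_simp
        linear_combination -4 * (P₀ x * Q₀ x) * hT
      hχ x hx := by
        convert! (((hP.hasDerivAt_mul₁₀ hQ hx).const_mul (n * a ^ 2)).sub
          ((hP.hasDerivAt_mul₀₀ hQ hx).const_mul T)).add
            ((hP.hasDerivAt_sq_mul₁₁ hQ hx).const_mul (a ^ 2 * b ^ 2 / 2)) using 1
        simp only [hK, hα, hβ]
        push_cast
        field_simp
        ring
      hσ x hx := by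
        convert! (((hP.hasDerivAt_mul₀₀ hQ hx).const_mul K).sub
          ((hP.hasDerivAt_sq_mul₁₁ hQ hx).const_mul (n * a ^ 2 * b ^ 2 / 2))).add
            ((hasDerivAt_pow_div 2 hx.ne').mul (((hP.hasDerivAt_mul₁₀ hQ hx).const_mul α).add
              ((hP.hasDerivAt_mul₀₁ hQ hx).const_mul β))) using 1
        simp only [Pi.add_apply]
        push_cast
        field_simp
        ring
      tempered_ψ := by fun_prop
      tempered_g := by fun_prop
      tempered_χ := by fun_prop
      tempered_σ := by fun_prop
      tempered_τ := by fun_prop }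

/-- The orthogonality relation of Green's formula for `ψ(x) = J̃_n(ax) J̃_0(bx)`. -/
theorem IsDecayingSolution.besselIntegral_relation {lam : ℝ} {u u₁ w w₁ : ℝ → ℝ}
    (h : IsDecayingSolution (2 * n) lam u u₁ w w₁) {T K α β : ℝ} (hT : T = 1 + a ^ 2 + b ^ 2)
    (hK : K = 2 * n * a ^ 2 - (2 * n + 2) * T) (hα : α = T * a ^ 2 / 2 + a ^ 2 * b ^ 2)
    (hβ : β = T * b ^ 2 / 2 + a ^ 2 * b ^ 2) :
    ((2 * n + 2) * K - lam) * besselIntegral u n 0 (2 * n + 1) a b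
      + (2 * α + 2 * β + T) * besselIntegral u n 0 (2 * n + 3) a b
      + (2 * α - a ^ 2 / 2 * K - n * a ^ 2 * b ^ 2 - n * a ^ 2)
        * besselIntegral u (n + 1) 0 (2 * n + 3) a b
      + ((2 * n + 2) * β - b ^ 2 / 2 * K - n * a ^ 2 * b ^ 2)
        * besselIntegral u n 1 (2 * n + 3) a b
      - (α * b ^ 2 + β * a ^ 2 + a ^ 2 * b ^ 2) / 2
        * besselIntegral u (n + 1) 1 (2 * n + 5) a b = 0 := by
  have hgreen := h.integral_mul_testSystem_eq_zero
    ((isBesselPair_normBesselJ n a).isTestSystem (isBesselPair_normBesselJ 0 b) hT hK hα hβ)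
  have hsum := h.sum_mul_besselIntegral
    ![(2 * n + 2) * K - lam, 2 * α + 2 * β + T,
      2 * α - a ^ 2 / 2 * K - n * a ^ 2 * b ^ 2 - n * a ^ 2,
      (2 * n + 2) * β - b ^ 2 / 2 * K - n * a ^ 2 * b ^ 2,
      -(α * b ^ 2 + β * a ^ 2 + a ^ 2 * b ^ 2) / 2]
    ![n, n, n + 1, n, n + 1] ![0, 0, 0, 1, 1]
    ![2 * n, 2 * n + 2, 2 * n + 2, 2 * n + 2, 2 * n + 4] a b
  rw [← hgreen.symm.trans (integral_congr_ae (.of_forall fun x => ?_))] at hsum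
  · simp only [Fin.sum_univ_five, Matrix.cons_val] at hsum
    linear_combination hsum
  · simp only [Fin.sum_univ_five, Matrix.cons_val]
    ring

end Relation

/-! ### Separation of variables -/

/-- The conformal factor `2 / (cos ϑ + cos φ)`, as a function of `t = ϑ` for `c = cos φ`. -/
def conformalFactor (c t : ℝ) : ℝ := 2 / (cos t + c)

section ConformalFactor

variable {c t : ℝ}

lemma conformalFactor_mul_cos (ht : 0 < cos t + c) :
    conformalFactor c t * cos t = 2 - conformalFactor c t * c := by
  unfold conformalFactor
  field_simp
  ring

lemma hasDerivAt_conformalFactor (ht : 0 < cos t + c) :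
    HasDerivAt (conformalFactor c) (conformalFactor c t ^ 2 * sin t / 2) t := by
  convert! (((hasDerivAt_cos t).add_const c).fun_inv ht.ne').const_mul 2 using 1
  unfold conformalFactor
  field_simp

lemma hasDerivAt_conformalFactor_mul_sin (ht : 0 < cos t + c) :
    HasDerivAt (fun t => conformalFactor c t * sin t / 2)
      (conformalFactor c t * cos t / 2 + conformalFactor c t ^ 2 * sin t ^ 2 / 4) t := by
  convert! ((hasDerivAt_conformalFactor ht).mul (hasDerivAt_sin t)).div_const 2 using 1
  ring

lemma hasDerivAt_conformalFactor_mul_const (d : ℝ) (ht : 0 < cos t + c) :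
    HasDerivAt (fun t => conformalFactor c t * d / 2)
      (conformalFactor c t * d / 2 * (conformalFactor c t * sin t) / 2) t := by
  convert! ((hasDerivAt_conformalFactor ht).mul_const d).div_const 2 using 1
  ring

/- The function is `a a' / 2` for `a = σ sin / 2`. -/
lemma hasDerivAt_sq_conformalFactor_mul_sin (ht : 0 < cos t + c) :
    HasDerivAt (fun t => conformalFactor c t ^ 2 * sin t *
        (2 * cos t + conformalFactor c t * sin t ^ 2) / 16)
      ((3 * conformalFactor c t ^ 4 * sin t ^ 4 + 10 * conformalFactor c t ^ 3 * sin t ^ 2 * cos t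
        + 4 * conformalFactor c t ^ 2 * (cos t ^ 2 - sin t ^ 2)) / 32) t := by
  have hσ := hasDerivAt_conformalFactor ht
  convert! (((hσ.pow 2).mul (hasDerivAt_sin t)).mul (((hasDerivAt_cos t).const_mul 2).add
    (hσ.mul ((hasDerivAt_sin t).pow 2)))).div_const 16 using 1
  simp only [Pi.mul_apply, Pi.add_apply, Pi.pow_apply]
  push_cast
  ring

/- The function is `b b' / 2` for `b = σ d / 2`. -/
lemma hasDerivAt_sq_conformalFactor_mul_const (d : ℝ) (ht : 0 < cos t + c) :
    HasDerivAt (fun t => (conformalFactor c t * d / 2) ^ 2 * (conformalFactor c t * sin t) / 4)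
      ((conformalFactor c t * d / 2) ^ 2 *
        (3 * conformalFactor c t ^ 2 * sin t ^ 2 + 2 * conformalFactor c t * cos t) / 8) t := by
  convert! (((hasDerivAt_conformalFactor_mul_const d ht).pow 2).mul
    ((hasDerivAt_conformalFactor ht).mul (hasDerivAt_sin t))).div_const 4 using 1
  simp only [Pi.mul_apply, Pi.pow_apply]
  push_cast
  ring

lemma sq_conformalFactor_mul_sin (φ : ℝ) (ht : 0 < cos t + cos φ) :
    (conformalFactor (cos φ) t * sin φ / 2) ^ 2 = (conformalFactor (cos φ) t ^ 2 * sin t ^ 2 - 4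
      + 4 * cos t * conformalFactor (cos φ) t) / 4 := by
  set σ := conformalFactor (cos φ) t
  linear_combination σ ^ 2 / 4 * sin_sq_add_cos_sq φ - σ ^ 2 / 4 * sin_sq_add_cos_sq t -
    (σ * cos φ + 2 - σ * cos t) / 4 * conformalFactor_mul_cos ht

lemma sq_conformalFactor_one_mul_sin (ht : 0 < cos t + 1) :
    (conformalFactor 1 t * sin t / 2) ^ 2 = conformalFactor 1 t - 1 := by
  linear_combination conformalFactor 1 t ^ 2 / 4 * sin_sq_add_cos_sq t -
    (conformalFactor 1 t * cos t + 2 - conformalFactor 1 t) / 4 * conformalFactor_mul_cos ht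

lemma conformalFactor_one_zero : conformalFactor 1 0 = 1 := by
  norm_num [conformalFactor]

/- Conjugation by `σ^{n+1}`, with `g` the logarithmic derivative of `σ^{n+1}`. -/
lemma conformalFactor_pow_mul_eq_gegenbauerCt {l T : ℝ} (n m : ℕ) (hl : 0 < l) (hT : T ≤ π)
    (hc : ∀ t ∈ Ico 0 T, 0 < cos t + c) {I I₁ I₂ g g' : ℝ → ℝ}
    (hg : g = fun t => (n + 1) * (conformalFactor c t * sin t / 2))
    (hg' : g' = fun t => (n + 1) *
      (conformalFactor c t * cos t / 2 + conformalFactor c t ^ 2 * sin t ^ 2 / 4))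
    (hI : ∀ t ∈ Ico 0 T, HasDerivAt I (I₁ t) t)
    (hI₁ : ∀ t ∈ Ico 0 T, HasDerivAt I₁ (I₂ t) t)
    (hode : ∀ t ∈ Ico 0 T,
      sin t * (g t * (g t * I t + I₁ t) + (g' t * I t + g t * I₁ t + I₂ t))
      + 2 * l * cos t * (g t * I t + I₁ t) + m * (m + 2 * l) * sin t * I t = 0)
    {t : ℝ} (ht : t ∈ Ico 0 T) :
    conformalFactor c t ^ (n + 1) * I t * gegenbauerCt m l 1 =
      conformalFactor c 0 ^ (n + 1) * I 0 * gegenbauerCt m l (cos t) := by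
  have hσ (t) (ht : t ∈ Ico 0 T) : HasDerivAt (fun t => conformalFactor c t ^ (n + 1))
      (conformalFactor c t ^ (n + 1) * g t) t := by
    convert! (hasDerivAt_conformalFactor (hc t ht)).pow (n + 1) using 1
    simp only [hg, Nat.add_sub_cancel]
    push_cast
    ring
  have hgderiv (t) (ht : t ∈ Ico 0 T) : HasDerivAt g (g' t) t := by
    rw [hg, hg']
    exact (hasDerivAt_conformalFactor_mul_sin (hc t ht)).const_mul _
  refine mul_gegenbauerCt_one_eq_of_ode m hl hT
    (f := fun t => conformalFactor c t ^ (n + 1) * I t)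
    (f₁ := fun t => conformalFactor c t ^ (n + 1) * (g t * I t + I₁ t))
    (f₂ := fun t => conformalFactor c t ^ (n + 1) *
      (g t * (g t * I t + I₁ t) + (g' t * I t + g t * I₁ t + I₂ t)))
    (fun t ht => ?_) (fun t ht => ?_) (fun t ht => ?_) ht
  · convert! (hσ t ht).mul (hI t ht) using 1
    ring
  · convert! (hσ t ht).mul (((hgderiv t ht).mul (hI t ht)).add (hI₁ t ht)) using 1
    simp only [Pi.add_apply, Pi.mul_apply]
    ring
  · linear_combination conformalFactor c t ^ (n + 1) * hode t ht

end ConformalFactor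

namespace IsDecayingSolution

variable {n j : ℕ} {lam : ℝ} {u u₁ w w₁ : ℝ → ℝ}
  (h : IsDecayingSolution (2 * n) lam u u₁ w w₁)
include h

lemma hasDerivAt_deriv_besselIntegral {a b P Q : ℝ → ℝ} {a' b' P' Q' t : ℝ}
    (ha : HasDerivAt a a' t) (hb : HasDerivAt b b' t) (hP : HasDerivAt P P' t)
    (hQ : HasDerivAt Q Q' t) (hPa : P t = a t * a' / 2) (hQb : Q t = b t * b' / 2) :
    HasDerivAt (fun t => -P t * besselIntegral u (n + 1) 0 (2 * n + 3) (a t) (b t)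
        - Q t * besselIntegral u n 1 (2 * n + 3) (a t) (b t))
      (-P' * besselIntegral u (n + 1) 0 (2 * n + 3) (a t) (b t)
        - Q' * besselIntegral u n 1 (2 * n + 3) (a t) (b t)
        + P t ^ 2 * besselIntegral u (n + 2) 0 (2 * n + 5) (a t) (b t)
        + 2 * P t * Q t * besselIntegral u (n + 1) 1 (2 * n + 5) (a t) (b t)
        + Q t ^ 2 * besselIntegral u n 2 (2 * n + 5) (a t) (b t)) t := by
  convert! (hP.neg.mul (h.hasDerivAt_besselIntegral (n + 1) 0 (2 * n + 2) ha hb)).sub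
    (hQ.mul (h.hasDerivAt_besselIntegral n 1 (2 * n + 2) ha hb)) using 1
  simp only [Pi.neg_apply]
  rw [← hPa, ← hQb]
  ring

lemma ode_theta (hlam : lam = 4 * (j * (j + 2 * n + 1))) {s c S b P P' Q Q' g g' : ℝ}
    (hb : b ^ 2 = (S ^ 2 * s ^ 2 - 4 + 4 * c * S) / 4)
    (hP : P = S ^ 2 * s * (2 * c + S * s ^ 2) / 16)
    (hP' : P' = (3 * S ^ 4 * s ^ 4 + 10 * S ^ 3 * s ^ 2 * c + 4 * S ^ 2 * (c ^ 2 - s ^ 2)) / 32)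
    (hQ : Q = b ^ 2 * (S * s) / 4) (hQ' : Q' = b ^ 2 * (3 * S ^ 2 * s ^ 2 + 2 * S * c) / 8)
    (hg : g = (n + 1) * (S * s / 2)) (hg' : g' = (n + 1) * (S * c / 2 + S ^ 2 * s ^ 2 / 4))
    {I I₁ I₂ : ℝ} (hI : I = besselIntegral u n 0 (2 * n + 1) (S * s / 2) b)
    (hI₁ : I₁ = -P * besselIntegral u (n + 1) 0 (2 * n + 3) (S * s / 2) b
      - Q * besselIntegral u n 1 (2 * n + 3) (S * s / 2) b)
    (hI₂ : I₂ = -P' * besselIntegral u (n + 1) 0 (2 * n + 3) (S * s / 2) b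
      - Q' * besselIntegral u n 1 (2 * n + 3) (S * s / 2) b
      + P ^ 2 * besselIntegral u (n + 2) 0 (2 * n + 5) (S * s / 2) b
      + 2 * P * Q * besselIntegral u (n + 1) 1 (2 * n + 5) (S * s / 2) b
      + Q ^ 2 * besselIntegral u n 2 (2 * n + 5) (S * s / 2) b) :
    s * (g * (g * I + I₁) + (g' * I + g * I₁ + I₂)) + 2 * (n + 1 / 2) * c * (g * I + I₁)
      + j * (j + 2 * (n + 1 / 2)) * s * I = 0 := by
  have rel := h.besselIntegral_relation (a := S * s / 2) (b := b) rfl rfl rfl rfl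
  have rleft := h.besselIntegral_recurrence_left n 0 (2 * n + 2) (S * s / 2) b
  have rright := h.besselIntegral_recurrence_right n 0 (2 * n + 2) (S * s / 2) b
  simp only [Nat.cast_zero, zero_add, one_mul] at rright
  rw [hb] at rel rright hQ hQ'
  subst hP hP' hQ hQ' hg hg' hI hI₁ hI₂ hlam
  linear_combination (-s / 4) * rel + s * (S * c / 2 + S ^ 2 * s ^ 2 / 4) ^ 2 * rleft
    + s * ((S ^ 2 * s ^ 2 - 4 + 4 * c * S) / 4 * S ^ 2 * s ^ 2 / 4) * rright

lemma ode_phi (hlam : lam = 4 * (j * (j + 2 * n + 1))) {s c S Q Q' g g' : ℝ}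
    (hsq : (S * s / 2) ^ 2 = S - 1) (hcos : S * c = 2 - S)
    (hQ : Q = S ^ 2 * s * (2 * c + S * s ^ 2) / 16)
    (hQ' : Q' = (3 * S ^ 4 * s ^ 4 + 10 * S ^ 3 * s ^ 2 * c + 4 * S ^ 2 * (c ^ 2 - s ^ 2)) / 32)
    (hg : g = (n + 1) * (S * s / 2)) (hg' : g' = (n + 1) * (S * c / 2 + S ^ 2 * s ^ 2 / 4))
    {I I₁ I₂ : ℝ} (hI : I = besselIntegral u n 0 (2 * n + 1) 0 (S * s / 2))
    (hI₁ : I₁ = -Q * besselIntegral u n 1 (2 * n + 3) 0 (S * s / 2))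
    (hI₂ : I₂ = -Q' * besselIntegral u n 1 (2 * n + 3) 0 (S * s / 2)
      + Q ^ 2 * besselIntegral u n 2 (2 * n + 5) 0 (S * s / 2)) :
    s * (g * (g * I + I₁) + (g' * I + g * I₁ + I₂)) + 2 * (1 / 2) * c * (g * I + I₁)
      + (j + n) * (j + n + 2 * (1 / 2)) * s * I = 0 := by
  have hss : S ^ 2 * s ^ 2 = 4 * (S - 1) := by linear_combination 4 * hsq
  have hQ_eq : Q = S ^ 2 * s / 8 := by
    linear_combination hQ + S * s / 8 * hcos + S * s / 16 * hss
  have hQ'_eq : Q' = 3 * S ^ 2 / 8 - S / 4 := by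
    linear_combination hQ' + (3 * (S ^ 2 * s ^ 2 + 4 * (S - 1)) + 10 * (2 - S) - 4) / 32 * hss
      + (10 * S ^ 2 * s ^ 2 + 4 * (S * c + 2 - S)) / 32 * hcos
  have hg'_eq : g' = (n + 1) * S / 2 := by
    linear_combination hg' + (n + 1) / 2 * hcos + (n + 1) / 4 * hss
  have rel := h.besselIntegral_relation (a := 0) (b := S * s / 2) rfl rfl rfl rfl
  have rright := h.besselIntegral_recurrence_right n 0 (2 * n + 2) 0 (S * s / 2)
  simp only [Nat.cast_zero, zero_add, one_mul] at rright
  rw [hsq] at rel rright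
  rw [hQ_eq] at hI₁ hI₂
  rw [hQ'_eq] at hI₂
  rw [hg'_eq, hg]
  rw [← hI] at rel
  subst hI₁ hI₂ hlam
  set J₁ := besselIntegral u n 1 (2 * n + 3) 0 (S * s / 2)
  set J₂ := besselIntegral u n 2 (2 * n + 5) 0 (S * s / 2)
  linear_combination (-s / 4) * rel + s * S ^ 2 / 4 * rright
    + s * ((n + 1) ^ 2 / 4 * I - (n + 1) * S / 8 * J₁ + S ^ 2 / 64 * J₂) * hss
    + s * ((n + 1) / 2 * I - S / 8 * J₁) * hcos

theorem besselIntegral_eq_gegenbauerCt_theta (hlam : lam = 4 * (j * (j + 2 * n + 1))) {φ : ℝ}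
    (hφ0 : 0 ≤ φ) {t : ℝ} (ht : t ∈ Ico 0 (π - φ)) :
    conformalFactor (cos φ) t ^ (n + 1) * besselIntegral u n 0 (2 * n + 1)
        (conformalFactor (cos φ) t * sin t / 2) (conformalFactor (cos φ) t * sin φ / 2)
        * gegenbauerCt j (n + 1 / 2) 1
      = conformalFactor (cos φ) 0 ^ (n + 1) *
        besselIntegral u n 0 (2 * n + 1) 0 (conformalFactor (cos φ) 0 * sin φ / 2)
        * gegenbauerCt j (n + 1 / 2) (cos t) := by
  have hpos (t) (ht : t ∈ Ico 0 (π - φ)) : 0 < cos t + cos φ := by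
    have := cos_lt_cos_of_nonneg_of_le_pi ht.1 (by linarith) ht.2
    rw [cos_pi_sub] at this
    linarith
  simpa using conformalFactor_pow_mul_eq_gegenbauerCt (c := cos φ) (l := n + 1 / 2) n j
    (by positivity) (by linarith) hpos rfl rfl
    (fun t ht => by
      convert! h.hasDerivAt_besselIntegral n 0 (2 * n)
        (hasDerivAt_conformalFactor_mul_sin (hpos t ht))
        (hasDerivAt_conformalFactor_mul_const (sin φ) (hpos t ht)) using 1
      ring)
    (fun t ht => h.hasDerivAt_deriv_besselIntegral
      (hasDerivAt_conformalFactor_mul_sin (hpos t ht))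
      (hasDerivAt_conformalFactor_mul_const (sin φ) (hpos t ht))
      (hasDerivAt_sq_conformalFactor_mul_sin (hpos t ht))
      (hasDerivAt_sq_conformalFactor_mul_const (sin φ) (hpos t ht)) (by ring) (by ring))
    (fun t ht => h.ode_theta hlam (sq_conformalFactor_mul_sin φ (hpos t ht))
      rfl rfl rfl rfl rfl rfl rfl rfl rfl)
    ht

theorem besselIntegral_eq_gegenbauerCt_phi (hlam : lam = 4 * (j * (j + 2 * n + 1))) {t : ℝ}
    (ht : t ∈ Ico 0 π) :
    conformalFactor 1 t ^ (n + 1) *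
        besselIntegral u n 0 (2 * n + 1) 0 (conformalFactor 1 t * sin t / 2)
        * gegenbauerCt (j + n) (1 / 2) 1
      = besselIntegral u n 0 (2 * n + 1) 0 0 * gegenbauerCt (j + n) (1 / 2) (cos t) := by
  have hpos (t) (ht : t ∈ Ico 0 π) : 0 < cos t + 1 := by
    have := cos_lt_cos_of_nonneg_of_le_pi ht.1 le_rfl ht.2
    rw [cos_pi] at this
    linarith
  have ha (t : ℝ) : HasDerivAt (fun _ => (0 : ℝ)) 0 t := hasDerivAt_const t 0
  simpa [conformalFactor_one_zero] using conformalFactor_pow_mul_eq_gegenbauerCt (c := 1)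
    (l := 1 / 2) n (j + n) (by positivity) le_rfl hpos rfl rfl
    (I := fun t => besselIntegral u n 0 (2 * n + 1) 0 (conformalFactor 1 t * sin t / 2))
    (fun t ht => by
      convert! h.hasDerivAt_besselIntegral n 0 (2 * n) (ha t)
        (hasDerivAt_conformalFactor_mul_sin (hpos t ht)) using 1
      ring)
    (fun t ht => h.hasDerivAt_deriv_besselIntegral (ha t)
      (hasDerivAt_conformalFactor_mul_sin (hpos t ht)) (ha t)
      (hasDerivAt_sq_conformalFactor_mul_sin (hpos t ht)) (by ring) (by ring))
    (fun t ht => by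
      push_cast
      exact h.ode_phi hlam (sq_conformalFactor_one_mul_sin (hpos t ht))
        ((conformalFactor_mul_cos (hpos t ht)).trans (by ring)) rfl rfl rfl rfl rfl
        (by ring) (by ring))
    ht

end IsDecayingSolution

/-! ### Gaussian means -/

section LogarithmicMean

variable {M κ L s : ℝ}

lemma integral_Ioi_eq_integral_exp_mul (hL : 0 < L) (g : ℝ → ℝ) :
    ∫ a in Ioi 0, g a = ∫ s, L * exp (L * s) * g (exp (L * s)) := by
  have himage : (fun s => exp (L * s)) '' univ = Ioi 0 := by
    rw [image_univ, ← range_exp]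
    exact (mul_left_surjective₀ hL.ne').range_comp exp
  have hderiv (s : ℝ) : HasDerivAt (fun s => exp (L * s)) (L * exp (L * s)) s := by
    simpa [mul_comm] using ((hasDerivAt_id s).const_mul L).exp
  have hsubst := integral_image_eq_integral_abs_deriv_smul .univ
    (fun s _ => (hderiv s).hasDerivWithinAt)
    (fun s _ t _ hst => mul_left_cancel₀ hL.ne' (exp_injective hst)) g
  rw [himage, Measure.restrict_univ] at hsubst
  simpa only [abs_mul, abs_exp, abs_of_pos hL, smul_eq_mul] using hsubst

lemma exp_neg_abs_le (s : ℝ) : exp (-|s|) ≤ 2 * (1 + s ^ 2)⁻¹ := by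
  rw [exp_neg, ← div_eq_mul_inv, inv_eq_one_div, div_le_div_iff₀ (exp_pos _) (by positivity)]
  linarith [quadratic_le_exp_of_nonneg (abs_nonneg s), sq_abs s, abs_nonneg s]

lemma abs_mul_exp_neg_exp_le {x : ℝ} (hL : 1 ≤ L) (hx : |x| ≤ M)
    (hx' : |x| ≤ M * exp (L * s) ^ 2) :
    |x * exp (-exp (2 * (L * (s - 1))))| ≤ M * exp (2 - |s|) := by
  have hM : 0 ≤ M := (abs_nonneg x).trans hx
  rw [abs_mul, abs_exp]
  rcases le_total s 0 with hs | hs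
  · calc |x| * exp (-exp (2 * (L * (s - 1)))) ≤ M * exp (L * s) ^ 2 * 1 := by
          gcongr
          exact exp_le_one_iff.2 (neg_nonpos.2 (exp_pos _).le)
      _ = M * exp (2 * (L * s)) := by rw [mul_one, two_mul (L * s), exp_add, sq]
      _ ≤ M * exp (2 - |s|) := by
          rw [abs_of_nonpos hs]
          gcongr
          nlinarith only [hs, hL]
  · rw [abs_of_nonneg hs]
    gcongr
    rcases le_total s 1 with hs1 | hs1
    · linarith [exp_pos (2 * (L * (s - 1)))]
    · nlinarith only [add_one_le_exp (2 * (L * (s - 1))), hL, hs1]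

lemma tendsto_exp_mul_of_neg {c : ℝ} (hc : c < 0) :
    Tendsto (fun L : ℝ => exp (L * c)) atTop (𝓝 0) :=
  tendsto_exp_atBot.comp (tendsto_id.atTop_mul_const_of_neg hc)

lemma tendsto_mul_exp_neg_exp {G : ℝ → ℝ} (h1 : ∀ a > 0, |G a| ≤ M)
    (h2 : ∀ a > 0, |G a| ≤ M * a ^ 2) (hG : Tendsto G atTop (𝓝 κ)) (hs0 : s ≠ 0) (hs1 : s ≠ 1) :
    Tendsto (fun L => G (exp (L * s)) * exp (-exp (2 * (L * (s - 1))))) atTop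
      (𝓝 ((Ioo (0 : ℝ) 1).indicator (fun _ => κ) s)) := by
  have hcutoff_of_lt (hs : s < 1) :
      Tendsto (fun L : ℝ => exp (-exp (2 * (L * (s - 1))))) atTop (𝓝 1) := by
    have := (tendsto_exp_mul_of_neg (show 2 * (s - 1) < 0 by linarith)).neg.rexp
    rw [neg_zero, exp_zero] at this
    exact this.congr fun L => by ring_nf
  rcases lt_or_gt_of_ne hs0 with hs | hs
  · have hG0 : Tendsto (fun L => G (exp (L * s))) atTop (𝓝 0) :=
      squeeze_zero_norm (fun L => h2 _ (exp_pos (L * s)))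
        (by simpa using ((tendsto_exp_mul_of_neg hs).pow 2).const_mul M)
    rw [indicator_of_notMem fun h => hs.not_gt h.1]
    simpa using hG0.mul (hcutoff_of_lt (by linarith))
  rcases lt_or_gt_of_ne hs1 with hs' | hs'
  · rw [indicator_of_mem (show s ∈ Ioo (0 : ℝ) 1 from ⟨hs, hs'⟩)]
    simpa using (hG.comp (tendsto_exp_atTop.comp (tendsto_id.atTop_mul_const hs))).mul
      (hcutoff_of_lt hs')
  · have hcutoff : Tendsto (fun L : ℝ => exp (-exp (2 * (L * (s - 1))))) atTop (𝓝 0) :=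
      tendsto_exp_neg_atTop_nhds_zero.comp (tendsto_exp_atTop.comp
        ((tendsto_id.atTop_mul_const (sub_pos.2 hs')).const_mul_atTop two_pos))
    rw [indicator_of_notMem fun h => hs'.not_gt h.2]
    simpa [mul_comm] using bdd_le_mul_tendsto_zero' M
      (.of_forall fun L => h1 _ (exp_pos (L * s))) hcutoff

/- Substitute `a = e^{Ls}`: the Gaussian cutoff becomes the indicator of `s < 1` as `L → ∞`. -/
theorem tendsto_integral_mul_gaussian_div {H : ℝ → ℝ} (hc : ContinuousOn H (Ioi 0))
    (h1 : ∀ a > 0, |a * H a| ≤ M) (h2 : ∀ a > 0, |a * H a| ≤ M * a ^ 2)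
    (hl : Tendsto (fun a => a * H a) atTop (𝓝 κ)) :
    Tendsto (fun L => (∫ a in Ioi 0, H a * exp (-(exp (-L) * a) ^ 2)) / L) atTop (𝓝 κ) := by
  have hlim : Tendsto (fun L : ℝ => ∫ s : ℝ,
      exp (L * s) * H (exp (L * s)) * exp (-exp (2 * (L * (s - 1)))))
      atTop (𝓝 (∫ s : ℝ, (Ioo (0 : ℝ) 1).indicator (fun _ => κ) s)) := by
    refine tendsto_integral_filter_of_dominated_convergence
      (fun s => M * exp 2 * (2 * (1 + s ^ 2)⁻¹)) (.of_forall fun L => ?_) ?_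
      ((integrable_inv_one_add_sq.const_mul 2).const_mul _) ?_
    · have : Continuous fun s => H (exp (L * s)) :=
        hc.comp_continuous (f := fun s => exp (L * s)) (by fun_prop) fun s => exp_pos _
      exact (((by fun_prop : Continuous fun s => exp (L * s)).mul this).mul
        (by fun_prop)).aestronglyMeasurable
    · filter_upwards [eventually_ge_atTop 1] with L hL
      refine .of_forall fun s => (abs_mul_exp_neg_exp_le hL (h1 _ (exp_pos _))
        (h2 _ (exp_pos _))).trans ?_
      have hM : 0 ≤ M := (abs_nonneg _).trans (h1 1 one_pos)
      rw [sub_eq_add_neg, exp_add, mul_assoc]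
      gcongr
      exact exp_neg_abs_le s
    · filter_upwards [Measure.ae_ne volume (0 : ℝ), Measure.ae_ne volume (1 : ℝ)] with s hs0 hs1
        using tendsto_mul_exp_neg_exp h1 h2 hl hs0 hs1
  rw [integral_indicator measurableSet_Ioo, setIntegral_const, volume_real_Ioo_of_le zero_le_one,
    sub_zero, one_smul] at hlim
  refine hlim.congr' ?_
  filter_upwards [eventually_gt_atTop 0] with L hL
  rw [integral_Ioi_eq_integral_exp_mul hL, eq_div_iff hL.ne', mul_comm, ← integral_const_mul]
  refine integral_congr_ae (.of_forall fun s => ?_)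
  have hcutoff : (exp (-L) * exp (L * s)) ^ 2 = exp (2 * (L * (s - 1))) := by
    rw [← exp_add, ← exp_nat_mul]
    push_cast
    ring_nf
  simp only [hcutoff]
  ring

end LogarithmicMean

section Gaussian

variable {e : ℝ}

lemma integrableOn_pow_mul_gaussian (k : ℕ) (he : 0 < e) :
    IntegrableOn (fun a => a ^ k * exp (-(e * a) ^ 2)) (Ioi 0) := by
  have h := integrableOn_rpow_mul_exp_neg_mul_sq (sq_pos_of_pos he) (s := k)
    (by linarith [k.cast_nonneg (α := ℝ)])
  refine h.congr_fun (fun x _ => ?_) measurableSet_Ioi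
  simp only [rpow_natCast, mul_pow, neg_mul]

lemma integral_pow_mul_gaussian (k : ℕ) (he : 0 < e) :
    ∫ a in Ioi 0, a ^ (2 * k + 1) * exp (-(e * a) ^ 2) = k.factorial / (2 * e ^ (2 * k + 2)) := by
  have h := integral_rpow_mul_exp_neg_mul_rpow (p := 2) (q := (2 * k + 1 : ℕ)) (b := e ^ 2) two_pos
    (by linarith [(2 * k + 1).cast_nonneg (α := ℝ)]) (sq_pos_of_pos he)
  rw [show (((2 * k + 1 : ℕ) : ℝ) + 1) / 2 = k + 1 by push_cast; ring, Gamma_nat_eq_factorial,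
    show -(((2 * k + 1 : ℕ) : ℝ) + 1) / 2 = -((k + 1 : ℕ) : ℝ) by push_cast; ring,
    rpow_neg (sq_nonneg e), rpow_natCast, ← pow_mul] at h
  simp only [rpow_natCast, rpow_two, neg_mul, ← mul_pow] at h
  rw [h, mul_add_one]
  field_simp

lemma integral_normBesselJ_mul_gaussian (n : ℕ) (x : ℝ) (he : 0 < e) :
    ∫ a in Ioi 0, normBesselJ n (a * x) * (a ^ (2 * n + 1) * exp (-(e * a) ^ 2))
      = exp (-(x / (2 * e)) ^ 2) / (2 * e ^ (2 * n + 2)) := by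
  let F (z : ℝ) (m : ℕ) (a : ℝ) := z ^ m / (m.factorial * (m + n).factorial) *
    (a ^ (2 * (m + n) + 1) * exp (-(e * a) ^ 2))
  have hF_int (z : ℝ) (m : ℕ) : IntegrableOn (F z m) (Ioi 0) :=
    (integrableOn_pow_mul_gaussian _ he).const_mul _
  have hF (z : ℝ) (m : ℕ) :
      ∫ a in Ioi 0, F z m a = (z / e ^ 2) ^ m / m.factorial * (1 / (2 * e ^ (2 * n + 2))) := by
    rw [integral_const_mul, integral_pow_mul_gaussian (m + n) he,
      show 2 * (m + n) + 2 = 2 * m + (2 * n + 2) by ring, pow_add, div_pow, ← pow_mul e 2 m]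
    field_simp
  have hF_norm (m : ℕ) :
      ∫ a in Ioi 0, ‖F (-(x ^ 2 / 4)) m a‖ = ∫ a in Ioi 0, F (x ^ 2 / 4) m a := by
    refine setIntegral_congr_fun measurableSet_Ioi fun a (ha : 0 < a) => ?_
    simp only [F, norm_mul, norm_div, norm_pow, norm_neg]
    simp [abs_of_pos ha]
  have hsum := hasSum_integral_of_summable_integral_norm (hF_int (-(x ^ 2 / 4))) (by
    simp only [hF_norm, hF]
    exact (Real.summable_pow_div_factorial _).mul_right _)
  have hexp := (NormedSpace.expSeries_div_hasSum_exp (-(x ^ 2 / 4) / e ^ 2)).mul_right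
    (1 / (2 * e ^ (2 * n + 2)))
  simp only [hF] at hsum
  rw [← Real.exp_eq_exp_ℝ, mul_one_div] at hexp
  rw [show -(x / (2 * e)) ^ 2 = -(x ^ 2 / 4) / e ^ 2 by field_simp; norm_num, hexp.unique hsum]
  refine integral_congr_ae (.of_forall fun a => ?_)
  simp only [normBesselJ, besselClifford, ← tsum_mul_right]
  refine tsum_congr fun m => ?_
  rw [show -((a * x) ^ 2 / 4) = a ^ 2 * -(x ^ 2 / 4) by ring, mul_pow, ← pow_mul]
  ring

end Gaussian

/-! ### The value at `a = b = 0` -/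

section LogarithmicSingularity

lemma mul_abs_log_two_mul_le {y : ℝ} (hy : 0 < y) : y * |log (2 * y)| ≤ 2 * y ^ 2 + 1 := by
  have hupper := log_le_sub_one_of_pos (show 0 < 2 * y by positivity)
  have hlower := one_sub_inv_le_log_of_pos (show 0 < 2 * y by positivity)
  have hinv : 0 < (2 * y)⁻¹ := by positivity
  calc y * |log (2 * y)| ≤ y * (2 * y + (2 * y)⁻¹) := by
        gcongr
        exact abs_le.2 ⟨by linarith, by linarith⟩
    _ ≤ 2 * y ^ 2 + 1 := by
        field_simp
        linarith

lemma tendsto_two_mul_exp_neg_mul {y : ℝ} (hy : 0 < y) :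
    Tendsto (fun L : ℝ => 2 * exp (-L) * y) atTop (𝓝[>] 0) :=
  tendsto_nhdsWithin_iff.2
    ⟨by simpa using (tendsto_exp_neg_atTop_nhds_zero.const_mul 2).mul_const y,
      .of_forall fun L => mem_Ioi.2 (by positivity)⟩

lemma isBigO_log_of_tendsto_div_log {u : ℝ → ℝ} {B : ℝ}
    (hB : Tendsto (fun x => u x / log (x / 2)) (𝓝[>] 0) (𝓝 B)) : u =O[𝓝[>] 0] log := by
  have hhalf : (fun x => log (x / 2)) =O[𝓝[>] 0] log := by
    have hconst : (fun _ : ℝ => log 2) =O[𝓝[>] 0] log :=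
      (Asymptotics.isLittleO_const_left.2
        (.inr (tendsto_abs_atBot_atTop.comp tendsto_log_nhdsGT_zero))).isBigO
    refine ((Asymptotics.isBigO_refl log _).sub hconst).congr' ?_ .rfl
    filter_upwards [self_mem_nhdsWithin] with x hx using (log_div (ne_of_gt hx) two_ne_zero).symm
  have hne : ∀ᶠ x in 𝓝[>] (0 : ℝ), log (x / 2) ≠ 0 := by
    filter_upwards [Ioo_mem_nhdsGT (zero_lt_two' ℝ)] with x hx
    exact (log_neg (by linarith [hx.1]) (by linarith [hx.2])).ne
  exact (Asymptotics.isBigO_of_div_tendsto_nhds (hne.mono fun x hx h => absurd h hx) B hB).trans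
    hhalf

lemma tendsto_div_of_tendsto_div_log {u : ℝ → ℝ} {B y : ℝ} (hy : 0 < y)
    (hB : Tendsto (fun x => u x / log (x / 2)) (𝓝[>] 0) (𝓝 B)) :
    Tendsto (fun L => u (2 * exp (-L) * y) / L) atTop (𝓝 (-B)) := by
  have hlog : Tendsto (fun L : ℝ => log y / L - 1) atTop (𝓝 (-1)) := by
    simpa using (tendsto_const_nhds.div_atTop tendsto_id).sub_const (1 : ℝ)
  have hlim := (hB.comp (tendsto_two_mul_exp_neg_mul hy)).mul hlog
  rw [mul_neg_one] at hlim
  refine hlim.congr' ?_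
  filter_upwards [eventually_gt_atTop 0, eventually_gt_atTop (log y)] with L hL hLy
  have hlog_eq : log (2 * exp (-L) * y / 2) = log y - L := by
    rw [show 2 * exp (-L) * y / 2 = y * exp (-L) by ring, log_mul hy.ne' (exp_pos _).ne', log_exp]
    ring
  have : log y - L ≠ 0 := by linarith
  simp only [Function.comp_apply, hlog_eq]
  field_simp

end LogarithmicSingularity

namespace IsDecayingSolution

variable {μ n : ℕ} {lam B : ℝ} {u u₁ w w₁ : ℝ → ℝ}

lemma exists_abs_le_log (h : IsDecayingSolution μ lam u u₁ w w₁) :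
    ∃ C, 0 ≤ C ∧ ∀ x > 0, |u x| ≤ C * (1 + |log x|) := by
  obtain ⟨K, hK, hlog⟩ := h.isBigO_log.exists_nonneg
  obtain ⟨d, hd, hnear⟩ := mem_nhdsGT_iff_exists_Ioo_subset.1 hlog.bound
  replace hd : 0 < d := hd
  obtain ⟨C, hC, hfar⟩ := h.exists_abs_mul_le
  have hCd : 0 ≤ C / d := by positivity
  refine ⟨K + C / d, by positivity, fun x hx => ?_⟩
  have habs := abs_nonneg (log x)
  rcases lt_or_ge x d with hxd | hxd
  · have hux : |u x| ≤ K * |log x| := hnear ⟨hx, hxd⟩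
    nlinarith only [hux, habs, hCd, hK, mul_nonneg hCd habs]
  · have hux : |u x| ≤ C / d := by
      rw [le_div_iff₀ hd]
      calc |u x| * d ≤ |u x| * x := by gcongr
        _ = |x * u x| := by rw [abs_mul, abs_of_pos hx, mul_comm]
        _ ≤ C * exp (-x / 4) := hfar x hx
        _ ≤ C := mul_le_of_le_one_right hC (exp_le_one_iff.2 (by linarith))
    nlinarith only [hux, habs, hCd, hK, mul_nonneg hCd habs, mul_nonneg hK habs]

section

variable (h : IsDecayingSolution (2 * n) lam u u₁ w w₁)
include h

lemma integral_besselIntegral_mul_gaussian_swap {e : ℝ} (he : 0 < e) :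
    ∫ a in Ioi 0, besselIntegral u n 0 (2 * n + 1) a 0 * a ^ (2 * n + 1) * exp (-(e * a) ^ 2)
      = ∫ x in Ioi 0, u x * x ^ (2 * n + 1) *
          (exp (-(x / (2 * e)) ^ 2) / (2 * e ^ (2 * n + 2))) := by
  have hu : IntegrableOn (fun x => u x * x ^ (2 * n + 1)) (Ioi 0) := by
    simpa only [mul_one] using h.integrableOn_mul (2 * n) (.const 1)
  have hprod := ((integrableOn_pow_mul_gaussian (2 * n + 1) he).mul_prod hu).bdd_mul
    (f := fun z : ℝ × ℝ => normBesselJ n (z.1 * z.2)) (c := 1)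
    ((continuous_normBesselJ n).comp (by fun_prop)).aestronglyMeasurable
    (.of_forall fun z => abs_normBesselJ_le_one n _)
  have hswap := integral_integral_swap (f := fun a x => normBesselJ n (a * x) *
    (a ^ (2 * n + 1) * exp (-(e * a) ^ 2) * (u x * x ^ (2 * n + 1)))) hprod
  calc _ = ∫ a in Ioi 0, ∫ x in Ioi 0, normBesselJ n (a * x) *
          (a ^ (2 * n + 1) * exp (-(e * a) ^ 2) * (u x * x ^ (2 * n + 1))) := by
        refine integral_congr_ae (.of_forall fun a => ?_)
        simp only [besselIntegral, mul_assoc _ (a ^ (2 * n + 1)), ← integral_mul_const]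
        refine integral_congr_ae (.of_forall fun x => ?_)
        simp only [zero_mul, normBesselJ_zero, Nat.factorial_zero, Nat.cast_one, div_one, mul_one]
        ring
    _ = _ := by
        rw [hswap]
        refine integral_congr_ae (.of_forall fun x => ?_)
        simp only [← integral_normBesselJ_mul_gaussian n x he, ← integral_const_mul]
        refine integral_congr_ae (.of_forall fun a => ?_)
        ring

lemma integral_besselIntegral_mul_gaussian {e : ℝ} (he : 0 < e) :
    ∫ a in Ioi 0, besselIntegral u n 0 (2 * n + 1) a 0 * a ^ (2 * n + 1) * exp (-(e * a) ^ 2)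
      = 2 ^ (2 * n + 1) * ∫ y in Ioi 0, u (2 * e * y) * (y ^ (2 * n + 1) * exp (-y ^ 2)) := by
  have hsubst := integral_comp_mul_left_Ioi (fun x => u x * x ^ (2 * n + 1) *
    (exp (-(x / (2 * e)) ^ 2) / (2 * e ^ (2 * n + 2)))) 0 (b := 2 * e) (by positivity)
  rw [mul_zero, smul_eq_mul, eq_inv_mul_iff_mul_eq₀ (by positivity)] at hsubst
  rw [h.integral_besselIntegral_mul_gaussian_swap he, ← hsubst, ← integral_const_mul,
    ← integral_const_mul]
  refine integral_congr_ae (.of_forall fun y => ?_)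
  simp only [mul_div_cancel_left₀ y (by positivity : 2 * e ≠ 0), mul_pow (2 * e) y, mul_pow 2 e,
    pow_succ e (2 * n + 1)]
  field_simp

lemma exists_norm_div_mul_gaussian_le :
    ∃ C, ∀ L ≥ 1, ∀ y > 0, ‖u (2 * exp (-L) * y) / L * (y ^ (2 * n + 1) * exp (-y ^ 2))‖ ≤
      C * (2 * (y ^ (2 * n + 1) * exp (-y ^ 2)) +
        (2 * (y ^ (2 * n + 2) * exp (-y ^ 2)) + y ^ (2 * n) * exp (-y ^ 2))) := by
  obtain ⟨C, hC, hlog⟩ := h.exists_abs_le_log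
  refine ⟨C, fun L hL y hy => ?_⟩
  have hL0 : 0 < L := one_pos.trans_le hL
  have hu : |u (2 * exp (-L) * y)| / L ≤ C * (2 + |log (2 * y)|) := by
    have hsplit : log (2 * exp (-L) * y) = -L + log (2 * y) := by
      rw [mul_right_comm, log_mul (by positivity) (exp_pos _).ne', log_exp, add_comm]
    have htri := abs_add_le (-L) (log (2 * y))
    rw [abs_neg, abs_of_pos hL0] at htri
    rw [div_le_iff₀ hL0, mul_assoc C]
    refine (hlog _ (by positivity)).trans (mul_le_mul_of_nonneg_left ?_ hC)
    rw [hsplit]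
    nlinarith only [htri, hL, abs_nonneg (log (2 * y))]
  rw [norm_mul, norm_div, norm_eq_abs, norm_of_nonneg hL0.le, norm_of_nonneg (by positivity)]
  calc |u (2 * exp (-L) * y)| / L * (y ^ (2 * n + 1) * exp (-y ^ 2))
      ≤ C * (2 + |log (2 * y)|) * (y ^ (2 * n + 1) * exp (-y ^ 2)) := by gcongr
    _ = C * (2 * (y ^ (2 * n + 1) * exp (-y ^ 2)) +
          y * |log (2 * y)| * (y ^ (2 * n) * exp (-y ^ 2))) := by ring
    _ ≤ C * (2 * (y ^ (2 * n + 1) * exp (-y ^ 2)) +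
          (2 * y ^ 2 + 1) * (y ^ (2 * n) * exp (-y ^ 2))) := by
        gcongr
        exact mul_abs_log_two_mul_le hy
    _ = _ := by ring

lemma tendsto_integral_comp_mul_gaussian_div
    (hB : Tendsto (fun x => u x / log (x / 2)) (𝓝[>] 0) (𝓝 B)) :
    Tendsto (fun L =>
        (∫ y in Ioi 0, u (2 * exp (-L) * y) * (y ^ (2 * n + 1) * exp (-y ^ 2))) / L)
      atTop (𝓝 (-(B * (n.factorial / 2)))) := by
  obtain ⟨C, hbound⟩ := h.exists_norm_div_mul_gaussian_le
  have hgauss (k : ℕ) : IntegrableOn (fun y => y ^ k * exp (-y ^ 2)) (Ioi 0) := by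
    simpa only [one_mul] using integrableOn_pow_mul_gaussian k one_pos
  have hlim : Tendsto
      (fun L => ∫ y in Ioi 0, u (2 * exp (-L) * y) / L * (y ^ (2 * n + 1) * exp (-y ^ 2)))
      atTop (𝓝 (∫ y in Ioi 0, -B * (y ^ (2 * n + 1) * exp (-y ^ 2)))) := by
    refine tendsto_integral_filter_of_dominated_convergence _ (.of_forall fun L => ?_)
      ((eventually_ge_atTop 1).mono fun L hL => ?_)
      ((((hgauss (2 * n + 1)).const_mul 2).add
        (((hgauss (2 * n + 2)).const_mul 2).add (hgauss (2 * n)))).const_mul C) ?_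
    · refine ContinuousOn.aestronglyMeasurable (.mul (.div_const ?_ L) (by fun_prop))
        measurableSet_Ioi
      exact h.continuousOn.comp (by fun_prop) fun y (hy : 0 < y) => mem_Ioi.2 (by positivity)
    · exact (ae_restrict_mem measurableSet_Ioi).mono fun y hy => hbound L hL y hy
    · exact (ae_restrict_mem measurableSet_Ioi).mono fun y hy =>
        (tendsto_div_of_tendsto_div_log hy hB).mul_const _
  have hmoment := integral_pow_mul_gaussian n one_pos
  simp only [one_mul, one_pow, mul_one] at hmoment
  rw [integral_const_mul, hmoment, neg_mul] at hlim
  refine hlim.congr fun L => ?_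
  rw [← integral_div]
  exact integral_congr_ae (.of_forall fun y => by ring)

end

end IsDecayingSolution

section AxisLimits

lemma cos_two_mul_arctan (a : ℝ) : cos (2 * arctan a) = (1 - a ^ 2) / (1 + a ^ 2) := by
  rw [cos_two_mul, cos_sq_arctan]
  field_simp
  ring

lemma sin_two_mul_arctan (a : ℝ) : sin (2 * arctan a) = 2 * a / (1 + a ^ 2) := by
  have hsin : sin (arctan a) = a * cos (arctan a) := by
    rw [← tan_mul_cos (cos_arctan_pos a).ne', tan_arctan]
  calc sin (2 * arctan a) = 2 * a * cos (arctan a) ^ 2 := by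
        rw [sin_two_mul, hsin]
        ring
    _ = 2 * a / (1 + a ^ 2) := by rw [cos_sq_arctan, mul_one_div]

lemma conformalFactor_two_mul_arctan (a : ℝ) : conformalFactor 1 (2 * arctan a) = 1 + a ^ 2 := by
  have hsum : (1 - a ^ 2) / (1 + a ^ 2) + 1 = 2 / (1 + a ^ 2) := by
    field_simp
    ring
  rw [conformalFactor, cos_two_mul_arctan, hsum, div_div_cancel₀ two_ne_zero]

lemma tendsto_inv_one_add_sq : Tendsto (fun a : ℝ => (1 + a ^ 2)⁻¹) atTop (𝓝 0) :=
  tendsto_inv_atTop_zero.comp (tendsto_atTop_add_const_left _ _ (tendsto_pow_atTop two_ne_zero))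

lemma tendsto_sq_div_one_add_sq : Tendsto (fun a : ℝ => a ^ 2 / (1 + a ^ 2)) atTop (𝓝 1) := by
  have hlim := tendsto_inv_one_add_sq.const_sub 1
  rw [sub_zero] at hlim
  refine hlim.congr fun a => ?_
  field_simp
  ring

lemma tendsto_one_sub_sq_div_one_add_sq :
    Tendsto (fun a : ℝ => (1 - a ^ 2) / (1 + a ^ 2)) atTop (𝓝 (-1)) := by
  have hlim := (tendsto_inv_one_add_sq.const_mul 2).sub_const 1
  rw [mul_zero, zero_sub] at hlim
  refine hlim.congr fun a => ?_
  field_simp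
  ring

lemma exists_abs_pow_mul_comp_le {g : ℝ → ℝ} (hg : Continuous g) (n : ℕ) :
    ∃ M, 0 ≤ M ∧ ∀ a : ℝ, |(a ^ 2 / (1 + a ^ 2)) ^ (n + 1) * g ((1 - a ^ 2) / (1 + a ^ 2))| ≤
      M * (a ^ 2 / (1 + a ^ 2)) := by
  obtain ⟨M, hM⟩ := (isCompact_Icc (a := (-1 : ℝ)) (b := 1)).exists_bound_of_continuousOn
    hg.continuousOn
  refine ⟨M, (norm_nonneg _).trans (hM 1 (by norm_num)), fun a => ?_⟩
  have hr : a ^ 2 / (1 + a ^ 2) ≤ 1 := by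
    rw [div_le_one (by positivity)]
    linarith
  have hmem : (1 - a ^ 2) / (1 + a ^ 2) ∈ Icc (-1 : ℝ) 1 := by
    rw [mem_Icc, le_div_iff₀ (by positivity), div_le_one (by positivity)]
    constructor <;> linarith [sq_nonneg a]
  rw [abs_mul, abs_of_nonneg (by positivity), mul_comm M]
  gcongr
  · exact pow_le_of_le_one (by positivity) hr n.succ_ne_zero
  · exact hM _ hmem

end AxisLimits

namespace IsDecayingSolution

variable {n j : ℕ} {lam B : ℝ} {u u₁ w w₁ : ℝ → ℝ} (h : IsDecayingSolution (2 * n) lam u u₁ w w₁)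
include h

lemma mul_besselIntegral_axis (hlam : lam = 4 * (j * (j + 2 * n + 1))) {a : ℝ} (ha : 0 ≤ a) :
    a * (besselIntegral u n 0 (2 * n + 1) a 0 * a ^ (2 * n + 1)) =
      besselIntegral u n 0 (2 * n + 1) 0 0 / gegenbauerCt j (n + 1 / 2) 1 *
        ((a ^ 2 / (1 + a ^ 2)) ^ (n + 1) *
          gegenbauerCt j (n + 1 / 2) ((1 - a ^ 2) / (1 + a ^ 2))) := by
  have ht : 2 * arctan a ∈ Ico 0 (π - 0) :=
    ⟨by linarith [arctan_nonneg.2 ha], by linarith [arctan_lt_pi_div_two a]⟩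
  have hpos := gegenbauerCt_at_one_pos j (l := n + 1 / 2) (by positivity)
  have haxis := h.besselIntegral_eq_gegenbauerCt_theta hlam le_rfl ht
  have hunit : (1 + a ^ 2) * (2 * a / (1 + a ^ 2)) / 2 = a := by field_simp
  simp only [cos_zero, sin_zero, mul_zero, zero_div, conformalFactor_one_zero, one_pow, one_mul,
    conformalFactor_two_mul_arctan, cos_two_mul_arctan, sin_two_mul_arctan, hunit] at haxis
  rw [div_mul_eq_mul_div, eq_div_iff hpos.ne', div_pow, div_mul_eq_mul_div, mul_div_assoc',
    eq_div_iff (by positivity)]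
  linear_combination a ^ (2 * n + 2) * haxis

lemma exists_abs_mul_besselIntegral_axis_le (hlam : lam = 4 * (j * (j + 2 * n + 1))) :
    ∃ M, 0 ≤ M ∧ ∀ a > 0, |a * (besselIntegral u n 0 (2 * n + 1) a 0 * a ^ (2 * n + 1))| ≤
      M * (a ^ 2 / (1 + a ^ 2)) := by
  obtain ⟨M, hM, hbound⟩ :=
    exists_abs_pow_mul_comp_le (contDiff_gegenbauerCt j (n + 1 / 2)).continuous n
  refine ⟨|besselIntegral u n 0 (2 * n + 1) 0 0 / gegenbauerCt j (n + 1 / 2) 1| * M,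
    by positivity, fun a ha => ?_⟩
  rw [h.mul_besselIntegral_axis hlam ha.le, abs_mul, mul_assoc _ M]
  gcongr
  exact hbound a

lemma tendsto_mul_besselIntegral_axis (hlam : lam = 4 * (j * (j + 2 * n + 1))) :
    Tendsto (fun a => a * (besselIntegral u n 0 (2 * n + 1) a 0 * a ^ (2 * n + 1))) atTop
      (𝓝 ((-1) ^ j * besselIntegral u n 0 (2 * n + 1) 0 0)) := by
  have hpos := gegenbauerCt_at_one_pos j (l := n + 1 / 2) (by positivity)
  have hlim := ((tendsto_sq_div_one_add_sq.pow (n + 1)).mul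
    (((contDiff_gegenbauerCt j (n + 1 / 2)).continuous.tendsto (-1)).comp
      tendsto_one_sub_sq_div_one_add_sq)).const_mul
        (besselIntegral u n 0 (2 * n + 1) 0 0 / gegenbauerCt j (n + 1 / 2) 1)
  rw [one_pow, one_mul, gegenbauerCt_neg_one, mul_left_comm, div_mul_cancel₀ _ hpos.ne'] at hlim
  exact hlim.congr' ((eventually_ge_atTop 0).mono fun a ha =>
    (h.mul_besselIntegral_axis hlam ha).symm)

/- The Gaussian means of `a ^ (2 * n + 1) * besselIntegral u n 0 (2 * n + 1) a 0` grow
logarithmically as the Gaussian flattens; the growth rate is computed once from the explicit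
integrand at `a → ∞`, and once, after exchanging the integrals, from `u` at `0`. -/
theorem besselIntegral_zero_zero (hlam : lam = 4 * (j * (j + 2 * n + 1)))
    (hB : Tendsto (fun x => u x / log (x / 2)) (𝓝[>] 0) (𝓝 B)) :
    besselIntegral u n 0 (2 * n + 1) 0 0 = (-1) ^ (j + 1) * 2 ^ (2 * n) * n.factorial * B := by
  obtain ⟨M, hM, hbound⟩ := h.exists_abs_mul_besselIntegral_axis_le hlam
  have hcont : Continuous fun a => besselIntegral u n 0 (2 * n + 1) a 0 * a ^ (2 * n + 1) :=
    .mul (continuous_iff_continuousAt.2 fun a =>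
      (h.hasDerivAt_besselIntegral n 0 (2 * n) (hasDerivAt_id a)
        (hasDerivAt_const a 0)).continuousAt) (continuous_pow _)
  have hmean := tendsto_integral_mul_gaussian_div (M := M) hcont.continuousOn
    (fun a ha => (hbound a ha).trans <| mul_le_of_le_one_right hM <|
      div_le_one_of_le₀ (by linarith) (by positivity))
    (fun a ha => (hbound a ha).trans <| mul_le_mul_of_nonneg_left
      (div_le_self (sq_nonneg a) (by linarith [sq_nonneg a])) hM)
    (h.tendsto_mul_besselIntegral_axis hlam)
  have hswap := ((h.tendsto_integral_comp_mul_gaussian_div hB).const_mul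
    (2 ^ (2 * n + 1))).congr fun L => show _ = _ by
      rw [mul_div_assoc', ← h.integral_besselIntegral_mul_gaussian (exp_pos (-L))]
  have hsign : ((-1 : ℝ) ^ j) * (-1) ^ j = 1 := by rw [← mul_pow]; norm_num
  linear_combination (-1) ^ j * tendsto_nhds_unique hmean hswap -
    besselIntegral u n 0 (2 * n + 1) 0 0 * hsign

end IsDecayingSolution

/-! ### Eigenfunctions of `D_{μ,0}` -/

lemma besselQ_apply (ν c : ℝ) {f : ℝ → ℝ} {x : ℝ} (hf : DifferentiableAt ℝ f x)
    (hf' : DifferentiableAt ℝ (deriv f) x) :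
    besselQ ν c f x = x ^ 2 * deriv (deriv f) x + (1 + 2 * c + ν) * x * deriv f x
      + (c * (c + ν) - x ^ 2) * f x := by
  have hderiv : HasDerivAt (fun y => eulerOp f y + (c + ν) * f y)
      (deriv f x + x * deriv (deriv f) x + (c + ν) * deriv f x) x := by
    convert! ((hasDerivAt_id x).mul hf'.hasDerivAt).add (hf.hasDerivAt.const_mul (c + ν)) using 1
    simp
  rw [besselQ, eulerOp, hderiv.deriv, eulerOp]
  ring

section Smooth

variable {f : ℝ → ℝ} (hf : ContDiffOn ℝ (⊤ : ℕ∞) f (Ioi 0)) {x : ℝ}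
include hf

lemma contDiffOn_deriv_Ioi : ContDiffOn ℝ (⊤ : ℕ∞) (deriv f) (Ioi 0) :=
  hf.deriv_of_isOpen isOpen_Ioi (by simp)

lemma differentiableAt_of_contDiffOn_Ioi (hx : 0 < x) : DifferentiableAt ℝ f x :=
  (hf.contDiffAt (Ioi_mem_nhds hx)).differentiableAt (by simp)

lemma besselQ_apply_of_contDiffOn_Ioi (ν c : ℝ) (hx : 0 < x) :
    besselQ ν c f x = x ^ 2 * deriv (deriv f) x + (1 + 2 * c + ν) * x * deriv f x
      + (c * (c + ν) - x ^ 2) * f x :=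
  besselQ_apply ν c (differentiableAt_of_contDiffOn_Ioi hf hx)
    (differentiableAt_of_contDiffOn_Ioi (contDiffOn_deriv_Ioi hf) hx)

lemma contDiffOn_besselQ (ν c : ℝ) : ContDiffOn ℝ (⊤ : ℕ∞) (besselQ ν c f) (Ioi 0) := by
  have hf₁ := contDiffOn_deriv_Ioi hf
  have hf₂ := contDiffOn_deriv_Ioi hf₁
  exact ContDiffOn.congr (by fun_prop) fun x hx => besselQ_apply_of_contDiffOn_Ioi hf ν c hx

end Smooth

section Eigenfunction

variable {μ : ℕ} {lam : ℝ} {u : ℝ → ℝ} (hu : ContDiffOn ℝ (⊤ : ℕ∞) u (Ioi 0))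
  (heig : ∀ x > 0, Dop μ 0 u x = lam * u x)
include hu

lemma integrableOn_sq_of_integrableOn_sq_mul_rpow {s : ℝ} (hs : 0 ≤ s)
    (hL2 : IntegrableOn (fun x => u x ^ 2 * x ^ s) (Ioi 0)) :
    IntegrableOn (fun x => u x ^ 2) (Ioi 1) := by
  have hsub : Ioi (1 : ℝ) ⊆ Ioi 0 := Ioi_subset_Ioi zero_le_one
  refine Integrable.mono' (hL2.mono_set hsub)
    (((hu.continuousOn.mono hsub).pow 2).aestronglyMeasurable measurableSet_Ioi) ?_
  filter_upwards [ae_restrict_mem measurableSet_Ioi] with x hx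
  rw [norm_of_nonneg (sq_nonneg _)]
  exact le_mul_of_one_le_right (sq_nonneg _) (one_le_rpow (mem_Ioi.1 hx).le hs)

include heig

lemma isDopSystem_of_eigenfunction :
    IsDopSystem μ lam u (deriv u) (besselQ 0 0 u) (deriv (besselQ 0 0 u)) := by
  have hw := contDiffOn_besselQ hu 0 0
  have hderiv {f : ℝ → ℝ} (hf : ContDiffOn ℝ (⊤ : ℕ∞) f (Ioi 0)) (x : ℝ) (hx : x > 0) :
      HasDerivAt f (deriv f x) x := (differentiableAt_of_contDiffOn_Ioi hf hx).hasDerivAt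
  refine ⟨hderiv hu, fun x hx => ?_, hderiv hw, fun x hx => ?_⟩
  · convert! hderiv (contDiffOn_deriv_Ioi hu) x hx using 1
    rw [besselQ_apply_of_contDiffOn_Ioi hu 0 0 hx]
    field_simp
    ring
  · convert! hderiv (contDiffOn_deriv_Ioi hw) x hx using 1
    have hux := heig x hx
    rw [Dop, besselQ_apply_of_contDiffOn_Ioi hw 0 μ hx, div_eq_iff (by positivity)] at hux
    field_simp
    linear_combination -hux

lemma isDecayingSolution_of_eigenfunction
    (hL2 : IntegrableOn (fun x => u x ^ 2 * x ^ ((μ : ℝ) + 1)) (Ioi 0))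
    (hlog : u =O[𝓝[>] 0] log) :
    IsDecayingSolution μ lam u (deriv u) (besselQ 0 0 u) (deriv (besselQ 0 0 u)) where
  toIsDopSystem := isDopSystem_of_eigenfunction hu heig
  isBigO_log := hlog
  integrableOn_sq := integrableOn_sq_of_integrableOn_sq_mul_rpow hu (by positivity) hL2

end Eigenfunction

/-! ### The integral formula -/

lemma gegenbauerCt_half_at_one (m : ℕ) : gegenbauerCt m (1 / 2) 1 = √π := by
  rw [gegenbauerCt_at_one m one_half_pos, Gamma_one_half_eq, mul_one_div_cancel two_ne_zero,
    Gamma_one, Gamma_nat_eq_factorial, mul_one, mul_div_cancel_right₀ _ (by positivity)]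

lemma mul_gegenbauerCt_at_one_mul_gegenbauerCt_half_at_one (n j : ℕ) :
    j.factorial * 2 ^ (4 * n) * (n.factorial : ℝ) ^ 2 / (π * Gamma (j + 2 * n + 1)) *
        gegenbauerCt j (n + 1 / 2) 1 * gegenbauerCt (j + n) (1 / 2) 1
      = 2 ^ (2 * n) * n.factorial := by
  have hduplication := Gamma_mul_Gamma_add_half ((n : ℝ) + 1 / 2)
  rw [show (n : ℝ) + 1 / 2 + 1 / 2 = n + 1 by ring, Gamma_nat_eq_factorial,
    show 2 * ((n : ℝ) + 1 / 2) = 2 * n + 1 by ring,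
    show (1 : ℝ) - (2 * n + 1) = -((2 * n : ℕ) : ℝ) by push_cast; ring, rpow_neg two_pos.le,
    rpow_natCast] at hduplication
  rw [gegenbauerCt_half_at_one, gegenbauerCt_at_one j (by positivity),
    show 2 * ((n : ℝ) + 1 / 2) = 2 * n + 1 by ring, ← add_assoc,
    show 4 * n = 2 * n + 2 * n by ring, pow_add]
  field_simp at hduplication ⊢
  linear_combination √π * hduplication + Gamma ((n : ℝ) * 2 + 1) * sq_sqrt pi_pos.le

lemma add_lt_pi_of_cos_add_cos_pos {ϑ φ : ℝ} (hϑ : ϑ ≤ π) (hφ : φ ∈ Icc 0 π)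
    (h : 0 < cos ϑ + cos φ) : ϑ + φ < π := by
  by_contra! hle
  have := cos_le_cos_of_nonneg_of_le_pi (x := π - φ) (y := ϑ) (by linarith [hφ.2]) hϑ (by linarith)
  rw [cos_pi_sub] at this
  linarith

lemma integral_mul_besselJt_mul_besselJt (u : ℝ → ℝ) (n : ℕ) (a b : ℝ) :
    ∫ x in Ioi (0 : ℝ), u x * besselJt n (a * x) * besselJt 0 (b * x) * x ^ (2 * (n : ℝ) + 1)
      = besselIntegral u n 0 (2 * n + 1) a b := by
  refine integral_congr_ae (.of_forall fun x => ?_)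
  have hJ₀ := besselJt_natCast 0 (b * x)
  have hpow : x ^ (2 * (n : ℝ) + 1) = x ^ (2 * n + 1) := by
    exact_mod_cast rpow_natCast x (2 * n + 1)
  rw [Nat.cast_zero] at hJ₀
  simp only [hJ₀, besselJt_natCast, hpow]
  ring

theorem IsDecayingSolution.besselIntegral_eq {n j : ℕ} {lam B : ℝ} {u u₁ w w₁ : ℝ → ℝ}
    (h : IsDecayingSolution (2 * n) lam u u₁ w w₁) (hlam : lam = 4 * (j * (j + 2 * n + 1)))
    (hB : Tendsto (fun x => u x / log (x / 2)) (𝓝[>] 0) (𝓝 B)) {ϑ φ : ℝ}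
    (hϑ : ϑ ∈ Icc 0 π) (hφ : φ ∈ Icc 0 π) (hpos : 0 < cos ϑ + cos φ) :
    besselIntegral u n 0 (2 * n + 1) (sin ϑ / (cos ϑ + cos φ)) (sin φ / (cos ϑ + cos φ))
      = (-1) ^ (j + 1) * (j.factorial * 2 ^ (4 * n) * (n.factorial : ℝ) ^ 2) /
          (π * Gamma (j + 2 * n + 1)) * B * ((cos ϑ + cos φ) / 2) ^ (n + 1) *
          gegenbauerCt j (n + 1 / 2) (cos ϑ) * gegenbauerCt (j + n) (1 / 2) (cos φ) := by
  have hsum := add_lt_pi_of_cos_add_cos_pos hϑ.2 hφ hpos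
  have hC₁ := gegenbauerCt_at_one_pos j (l := n + 1 / 2) (by positivity)
  have hC₂ := gegenbauerCt_at_one_pos (j + n) one_half_pos
  have htheta := h.besselIntegral_eq_gegenbauerCt_theta hlam hφ.1
    (show ϑ ∈ Ico 0 (π - φ) from ⟨hϑ.1, by linarith⟩)
  have hphi := h.besselIntegral_eq_gegenbauerCt_phi hlam
    (show φ ∈ Ico 0 π from ⟨hφ.1, by linarith [hϑ.1]⟩)
  rw [h.besselIntegral_zero_zero hlam hB] at hphi
  have hconst := mul_gegenbauerCt_at_one_mul_gegenbauerCt_half_at_one n j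
  have hzero : conformalFactor (cos φ) 0 = conformalFactor 1 φ := by
    rw [conformalFactor, conformalFactor, cos_zero, add_comm]
  have hfactor : conformalFactor (cos φ) ϑ = 2 / (cos ϑ + cos φ) := rfl
  have harg (s : ℝ) : conformalFactor (cos φ) ϑ * s / 2 = s / (cos ϑ + cos φ) := by
    rw [hfactor]
    ring
  rw [hzero, harg, harg, hfactor] at htheta
  refine mul_right_cancel₀ (mul_pos hC₁ hC₂).ne' ?_
  have hinv : ((cos ϑ + cos φ) / 2) ^ (n + 1) * (2 / (cos ϑ + cos φ)) ^ (n + 1) = 1 := by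
    rw [← mul_pow, div_mul_div_cancel₀ two_ne_zero, div_self hpos.ne', one_pow]
  rw [mul_div_assoc]
  linear_combination
    ((cos ϑ + cos φ) / 2) ^ (n + 1) * gegenbauerCt (j + n) (1 / 2) 1 * htheta
    + ((cos ϑ + cos φ) / 2) ^ (n + 1) * gegenbauerCt j (n + 1 / 2) (cos ϑ) * hphi
    - (-1) ^ (j + 1) * B * ((cos ϑ + cos φ) / 2) ^ (n + 1) * gegenbauerCt j (n + 1 / 2) (cos ϑ) *
        gegenbauerCt (j + n) (1 / 2) (cos φ) * hconst
    - besselIntegral u n 0 (2 * n + 1) (sin ϑ / (cos ϑ + cos φ)) (sin φ / (cos ϑ + cos φ)) *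
        gegenbauerCt j (n + 1 / 2) 1 * gegenbauerCt (j + n) (1 / 2) 1 * hinv

end

/-- **Theorem B, case `ν = 0`.** -/
theorem theoremB_nu_zero (μ : ℕ) (hμ : Even μ) (j : ℕ) (u : ℝ → ℝ)
    (hu_smooth : ContDiffOn ℝ (⊤ : ℕ∞) u (Set.Ioi 0))
    (hu_L2 : MeasureTheory.IntegrableOn
      (fun x => u x ^ 2 * x ^ ((μ : ℝ) + 1)) (Set.Ioi 0))
    (hu_eig : ∀ x > (0 : ℝ), Dop μ 0 u x = 4 * j * (j + (μ : ℝ) + 1) * u x)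
    (B : ℝ) (hB : Filter.Tendsto (fun x : ℝ => u x / Real.log (x / 2))
      (nhdsWithin 0 (Set.Ioi 0)) (nhds B)) :
    ∀ ϑ ∈ Set.Icc (0 : ℝ) Real.pi, ∀ φ ∈ Set.Icc (0 : ℝ) Real.pi,
      Real.cos ϑ + Real.cos φ > 0 →
      ∫ x in Set.Ioi (0 : ℝ),
          u x * besselJt ((μ : ℝ) / 2) (Real.sin ϑ / (Real.cos ϑ + Real.cos φ) * x)
            * besselJt 0 (Real.sin φ / (Real.cos ϑ + Real.cos φ) * x)
            * x ^ ((μ : ℝ) + 1)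
        = ((-1) ^ (j + 1) * (j.factorial * (2 : ℝ) ^ (2 * (μ : ℝ))
                * Real.Gamma (((μ : ℝ) + 2) / 2) ^ 2)
              / (Real.pi * Real.Gamma (j + (μ : ℝ) + 1)) * B)
            * ((Real.cos ϑ + Real.cos φ) / 2) ^ (((μ : ℝ) + 2) / 2)
            * gegenbauerCt j (((μ : ℝ) + 1) / 2) (Real.cos ϑ)
            * gegenbauerCt (j + μ / 2) (1 / 2) (Real.cos φ) := by
  obtain ⟨n, rfl⟩ := even_iff_exists_two_mul.1 hμ
  intro ϑ hϑ φ hφ hpos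
  have hlam : 4 * j * (j + ((2 * n : ℕ) : ℝ) + 1) = 4 * (j * (j + 2 * n + 1)) := by
    push_cast
    ring
  have hu := isDecayingSolution_of_eigenfunction hu_smooth hu_eig hu_L2
    (isBigO_log_of_tendsto_div_log hB)
  have hindex : ((2 * n : ℕ) : ℝ) / 2 = n := by rw [Nat.cast_mul, Nat.cast_two]; ring
  have hpow : ((2 * n : ℕ) + 2 : ℝ) / 2 = (n + 1 : ℕ) := by push_cast; ring
  have htwo : 2 * ((2 * n : ℕ) : ℝ) = (4 * n : ℕ) := by push_cast; ring
  have horder : ((2 * n : ℕ) + 1 : ℝ) / 2 = n + 1 / 2 := by push_cast; ring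
  rw [hindex, hpow, htwo, horder, rpow_natCast, rpow_natCast, Nat.mul_div_cancel_left n two_pos,
    Nat.cast_succ, Gamma_nat_eq_factorial, Nat.cast_mul, Nat.cast_two,
    integral_mul_besselJt_mul_besselJt, hu.besselIntegral_eq hlam hB hϑ hφ hpos]
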